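/- Let n ≥ 2 be an integer and 0 < λ ≤ Λ real constants. Set σ := 1 − (λ/(λ+(n−1)Λ))^n · (1/(4√n))^n and M := 884736·n³·(36n)^{max{1, (n−1)Λ/λ − 1}}. Let Ω ⊆ ℝⁿ be an open set containing the closed ball of radius 2√n centered at 0, and let v : Ω → ℝ be a continuous viscosity supersolution of M⁻_{λ,Λ}(D²v) ≤ 0 in Ω with |v| ≤ 1/4 on Ω. Then for every real t > M, |A⁻_t(v,Ω) ∩ Q₁| ≤ σ^{−1}·t^{−ε} where ε := log(1/σ)/log M. -/

import Mathlib

open MeasureTheory Metric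
open scoped InnerProductSpace ENNReal

noncomputable section

abbrev Euc (n : ℕ) := EuclideanSpace ℝ (Fin n)

/-- Loewner order -/
def matLE {n : ℕ} (A B : Matrix (Fin n) (Fin n) ℝ) : Prop := (B - A).PosSemidef

/-- Pucci minimal operator -/
def pucciInf {n : ℕ} (lam Lam : ℝ) (M : Matrix (Fin n) (Fin n) ℝ) : ℝ :=
  sInf {t : ℝ | ∃ A : Matrix (Fin n) (Fin n) ℝ,
    A.IsSymm ∧ matLE (lam • 1) A ∧ matLE A (Lam • 1) ∧ t = (A * M).trace}

/-- Hessian matrix via second iterated Fréchet derivative -/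
def hessianMatrix {n : ℕ} (φ : Euc n → ℝ) (x : Euc n) : Matrix (Fin n) (Fin n) ℝ :=
  Matrix.of fun i j =>
    iteratedFDeriv ℝ 2 φ x ![EuclideanSpace.single i 1, EuclideanSpace.single j 1]

/-- viscosity supersolution of M⁻(D²v) ≤ 0 -/
def ViscSupersol {n : ℕ} (lam Lam : ℝ) (Ω : Set (Euc n)) (v : Euc n → ℝ) : Prop :=
  ∀ x₀ ∈ Ω, ∀ φ : Euc n → ℝ,
    (∃ U : Set (Euc n), IsOpen U ∧ x₀ ∈ U ∧ ContDiffOn ℝ 2 φ U) →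
    IsLocalMinOn (fun x => v x - φ x) Ω x₀ →
    pucciInf lam Lam (hessianMatrix φ x₀) ≤ 0

def Gm {n : ℕ} (K : ℝ) (v : Euc n → ℝ) (Ω : Set (Euc n)) : Set (Euc n) :=
  {xb | xb ∈ Ω ∧ ∃ p : Euc n, ∀ x ∈ Ω, v x ≥ v xb + ⟪p, x - xb⟫_ℝ - K / 2 * ‖x - xb‖ ^ 2}

def Am {n : ℕ} (K : ℝ) (v : Euc n → ℝ) (Ω : Set (Euc n)) : Set (Euc n) := Ω \ Gm K v Ω

/-- open cube of side r centered at x -/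
def cube {n : ℕ} (r : ℝ) (x : Euc n) : Set (Euc n) := {y | ∀ i, |y i - x i| < r / 2}

/-!
Add `K / 2 * ‖x‖ ^ 2` to the supersolution `v`: touching `v` from below by a paraboloid of opening
`K` becomes touching `ψ = v + K / 2 * ‖x‖ ^ 2` by an affine function of some slope `y`, and the
equation bounds the Hessian of `ψ` there by `L = K (λ + (n - 1) Λ) / λ`. The slopes found at the
contact points thus have measure at most `L ^ n` times that of the contact points. No regularity of
`v` is needed for this: the supremum `Γ` of the affine functions touching `ψ` is convex, its
proximal map `X` is 1-Lipschitz, and the contact points and their slopes are the images of one set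
under `X` and `id - X`, so that the area formula only sees `det DX` and `det (id - DX)`. These are
compared through the eigenvalues of `DX`, since the equation applies wherever `Γ` touches `ψ`.

The barrier `‖x‖ ^ (-α)` locates the contact points: one point touched with opening `K` in the
neighbourhood of a cube yields a fraction `1 - σ` of that cube touched with opening `M K`. The
Calderón-Zygmund decomposition into dyadic cubes turns this into `|A_{M K} ∩ Q| ≤ σ |A_K ∩ Q|`, and
iteration gives the power decay.
-/

open Filter Set
open scoped Topology

/-! ### The Pucci operator on rank-one perturbations of the identity -/

lemma dotProduct_mulVec_le_trace {ι : Type*} [Fintype ι] {C : Matrix ι ι ℝ} (hC : C.PosSemidef)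
    {e : ι → ℝ} (he : e ⬝ᵥ e = 1) : e ⬝ᵥ C.mulVec e ≤ C.trace := by
  classical
  set P : Matrix ι ι ℝ := 1 - Matrix.vecMulVec e e with hP
  have hPt : P.conjTranspose = P := by
    simp [hP]
  have hPP : P * P = P := by
    have hee : Matrix.vecMulVec e e * Matrix.vecMulVec e e = Matrix.vecMulVec e e := by
      rw [Matrix.vecMulVec_mul_vecMulVec, he, one_smul]
    rw [hP, sub_mul, mul_sub, one_mul, mul_sub, hee]
    simp
  have hnonneg : 0 ≤ (P * C * P).trace := by
    simpa only [hPt] using (hC.mul_mul_conjTranspose_same P).trace_nonneg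
  rw [Matrix.trace_mul_cycle, hPP, Matrix.trace_mul_comm, hP, mul_sub, mul_one,
    Matrix.trace_sub, Matrix.mul_vecMulVec, Matrix.trace_vecMulVec, dotProduct_comm] at hnonneg
  exact sub_nonneg.1 hnonneg

section Pucci

variable {n : ℕ} {lam Lam : ℝ} {A : Matrix (Fin n) (Fin n) ℝ} {e : Fin n → ℝ}

lemma le_dotProduct_mulVec_of_matLE (hA : matLE (lam • 1) A) (he : e ⬝ᵥ e = 1) :
    lam ≤ e ⬝ᵥ A.mulVec e := by
  have h := hA.dotProduct_mulVec_nonneg e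
  simp only [star_trivial, Matrix.sub_mulVec, Matrix.smul_mulVec, Matrix.one_mulVec,
    dotProduct_sub, dotProduct_smul, he, smul_eq_mul, mul_one] at h
  exact sub_nonneg.1 h

lemma trace_sub_dotProduct_mulVec_le (hA : matLE A (Lam • 1)) (he : e ⬝ᵥ e = 1) :
    A.trace - e ⬝ᵥ A.mulVec e ≤ ((n : ℝ) - 1) * Lam := by
  have h := dotProduct_mulVec_le_trace hA he
  simp only [Matrix.sub_mulVec, Matrix.smul_mulVec, Matrix.one_mulVec, dotProduct_sub,
    dotProduct_smul, he, smul_eq_mul, mul_one, Matrix.trace_sub, Matrix.trace_smul,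
    Matrix.trace_one, Fintype.card_fin] at h
  linarith

lemma le_pucciInf_vecMulVec_sub_smul_one (hLam : lam ≤ Lam) (he : e ⬝ᵥ e = 1) {N κ : ℝ}
    (hκ : 0 ≤ κ) (hN : κ ≤ N) :
    lam * (N - κ) - ((n : ℝ) - 1) * Lam * κ ≤
      pucciInf lam Lam (N • Matrix.vecMulVec e e - κ • 1) := by
  refine le_csInf ⟨_, lam • 1, ?_, ?_, ?_, rfl⟩ ?_
  · simp [Matrix.IsSymm]
  · simp [matLE, Matrix.PosSemidef.zero]
  · rw [matLE, ← sub_smul]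
    exact Matrix.PosSemidef.one.smul (sub_nonneg.2 hLam)
  rintro _ ⟨A, -, hlam, hLam, rfl⟩
  have hlow := le_dotProduct_mulVec_of_matLE hlam he
  have hup := trace_sub_dotProduct_mulVec_le hLam he
  have htrace : (A * (N • Matrix.vecMulVec e e - κ • 1)).trace
      = (N - κ) * (e ⬝ᵥ A.mulVec e) - κ * (A.trace - e ⬝ᵥ A.mulVec e) := by
    rw [mul_sub, Matrix.mul_smul, Matrix.mul_smul, mul_one, Matrix.mul_vecMulVec,
      Matrix.trace_sub, Matrix.trace_smul, Matrix.trace_smul, Matrix.trace_vecMulVec,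
      dotProduct_comm, smul_eq_mul, smul_eq_mul]
    ring
  rw [htrace]
  nlinarith [mul_le_mul_of_nonneg_left hlow (sub_nonneg.2 hN), mul_le_mul_of_nonneg_left hup hκ]

end Pucci

/-! ### Second-order test functions -/

section Subjet

variable {E : Type*} [NormedAddCommGroup E] [InnerProductSpace ℝ E]

/-- Second-order subjets: near `x₀`, and within `Ω`, the function `v` lies above the polynomial
`v x₀ + ⟪p, x - x₀⟫ + q (x - x₀) / 2` up to an error `o(‖x - x₀‖²)`. The quadratic form is given
as a plain function `q`. -/
def HasSubjet (v : E → ℝ) (Ω : Set E) (x₀ p : E) (q : E → ℝ) : Prop :=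
  ∀ ε > 0, ∀ᶠ x in 𝓝[Ω] x₀,
    v x₀ + ⟪p, x - x₀⟫_ℝ + 1 / 2 * q (x - x₀) - ε * ‖x - x₀‖ ^ 2 ≤ v x

/-- The viscosity form of the bound `D²ψ ≤ L` on `Ω`: a quadratic polynomial touching `ψ` from
below whose Hessian is concentrated on one direction has Hessian at most `L` there. -/
def SubjetCurvatureLE (ψ : E → ℝ) (Ω : Set E) (L : ℝ) : Prop :=
  ∀ x₀ ∈ Ω, ∀ p e : E, ∀ N : ℝ, ‖e‖ = 1 →
    HasSubjet ψ Ω x₀ p (fun h => N * ⟪e, h⟫_ℝ ^ 2) → N ≤ L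

lemma HasSubjet.mono {v ψ : E → ℝ} {Ω Ω' : Set E} {x₀ p : E} {q : E → ℝ}
    (h : HasSubjet v Ω x₀ p q) (hΩ : Ω' ⊆ Ω) (hle : ∀ x ∈ Ω', v x ≤ ψ x) (heq : v x₀ = ψ x₀) :
    HasSubjet ψ Ω' x₀ p q := by
  intro ε hε
  filter_upwards [nhdsWithin_mono x₀ hΩ (h ε hε), self_mem_nhdsWithin] with x hx hxΩ
  exact (heq ▸ hx).trans (hle x hxΩ)

/-- The polynomials against which viscosity supersolutions are tested. -/
def testQuadratic (p e x₀ : E) (N κ : ℝ) (x : E) : ℝ :=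
  ⟪p, x - x₀⟫_ℝ + 1 / 2 * (N * ⟪e, x - x₀⟫_ℝ ^ 2 - κ * ‖x - x₀‖ ^ 2)

variable {p e x₀ : E} {N κ : ℝ}

lemma contDiff_testQuadratic : ContDiff ℝ 2 (testQuadratic p e x₀ N κ) := by
  unfold testQuadratic
  have hinner (q : E) : ContDiff ℝ 2 fun x => ⟪q, x - x₀⟫_ℝ :=
    contDiff_const.inner ℝ (contDiff_id.sub contDiff_const)
  have hnorm : ContDiff ℝ 2 fun x : E => ‖x - x₀‖ ^ 2 :=
    (contDiff_id.sub contDiff_const).norm_sq ℝ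
  exact (hinner p).add (contDiff_const.mul
    ((contDiff_const.mul ((hinner e).pow 2)).sub (contDiff_const.mul hnorm)))

lemma hasFDerivAt_testQuadratic (x : E) :
    HasFDerivAt (testQuadratic p e x₀ N κ)
      (innerSL ℝ (p + (N * ⟪e, x - x₀⟫_ℝ) • e - κ • (x - x₀))) x := by
  have hsub : HasFDerivAt (fun x => x - x₀) (ContinuousLinearMap.id ℝ E) x :=
    (hasFDerivAt_id x).sub_const x₀
  have hinner (q : E) : HasFDerivAt (fun x => ⟪q, x - x₀⟫_ℝ) (innerSL ℝ q) x :=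
    (innerSL ℝ q).hasFDerivAt.comp x hsub
  refine ((hinner p).add ((((hinner e).pow 2).const_mul N).sub
    (hsub.norm_sq.const_mul κ) |>.const_mul (1 / 2))).congr_fderiv ?_
  ext h
  simp only [map_sub, map_add, map_smul]
  simp only [one_div, Nat.add_one_sub_one, pow_one, nsmul_eq_mul, Nat.cast_ofNat,
    ContinuousLinearMap.comp_id, add_apply, coe_innerSL_apply, smul_apply, sub_apply, smul_eq_mul]
  ring

lemma iteratedFDeriv_two_testQuadratic (h k : E) :
    iteratedFDeriv ℝ 2 (testQuadratic p e x₀ N κ) x₀ ![h, k]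
      = N * (⟪e, h⟫_ℝ * ⟪e, k⟫_ℝ) - κ * ⟪h, k⟫_ℝ := by
  have hgrad : HasFDerivAt (fun x => p + (N * ⟪e, x - x₀⟫_ℝ) • e - κ • (x - x₀))
      ((N • innerSL ℝ e).smulRight e - κ • ContinuousLinearMap.id ℝ E) x₀ := by
    have hsub : HasFDerivAt (fun x => x - x₀) (ContinuousLinearMap.id ℝ E) x₀ :=
      (hasFDerivAt_id x₀).sub_const x₀
    have hinner : HasFDerivAt (fun x => ⟪e, x - x₀⟫_ℝ) (innerSL ℝ e) x₀ :=
      (innerSL ℝ e).hasFDerivAt.comp x₀ hsub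
    exact (((hinner.const_mul N).smul_const e).const_add p).sub (hsub.const_smul κ)
  have hhess : HasFDerivAt (fderiv ℝ (testQuadratic p e x₀ N κ))
      ((innerSL ℝ).comp ((N • innerSL ℝ e).smulRight e - κ • ContinuousLinearMap.id ℝ E)) x₀ := by
    have hcomp := (innerSL ℝ (E := E)).hasFDerivAt.comp x₀ hgrad
    exact hcomp.congr_of_eventuallyEq
      (Eventually.of_forall fun x => (hasFDerivAt_testQuadratic x).fderiv)
  rw [iteratedFDeriv_two_apply, hhess.fderiv]
  change ⟪(N * ⟪e, h⟫_ℝ) • e - κ • h, k⟫_ℝ = _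
  rw [inner_sub_left, real_inner_smul_left, real_inner_smul_left, mul_assoc]

end Subjet

section Supersolution

variable {n : ℕ} {lam Lam : ℝ} {Ω : Set (Euc n)} {v : Euc n → ℝ}

lemma hessianMatrix_testQuadratic (p e x₀ : Euc n) (N κ : ℝ) :
    hessianMatrix (testQuadratic p e x₀ N κ) x₀
      = N • Matrix.vecMulVec (e : Fin n → ℝ) e - κ • 1 := by
  ext i j
  rw [hessianMatrix, Matrix.of_apply, iteratedFDeriv_two_testQuadratic]
  simp [EuclideanSpace.inner_single_right, Matrix.vecMulVec_apply, Matrix.one_apply, eq_comm]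

lemma ViscSupersol.testQuadratic_le (hs : ViscSupersol lam Lam Ω v) (hLam : lam ≤ Lam)
    {x₀ : Euc n} (hx₀ : x₀ ∈ Ω) {p e : Euc n} (he : ‖e‖ = 1) {N κ : ℝ} (hκ : 0 ≤ κ) (hN : κ ≤ N)
    (htouch : ∀ᶠ x in 𝓝[Ω] x₀, v x₀ + testQuadratic p e x₀ N κ x ≤ v x) :
    lam * (N - κ) ≤ ((n : ℝ) - 1) * Lam * κ := by
  have hmin : IsLocalMinOn (fun x => v x - testQuadratic p e x₀ N κ x) Ω x₀ := by
    filter_upwards [htouch] with x hx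
    simp only [testQuadratic, sub_self, inner_zero_right, norm_zero] at hx ⊢
    linarith
  have hpucci := hs x₀ hx₀ _ ⟨univ, isOpen_univ, trivial, contDiff_testQuadratic.contDiffOn⟩ hmin
  have hee : (e : Fin n → ℝ) ⬝ᵥ e = 1 := by
    rw [← star_trivial (e : Fin n → ℝ), ← EuclideanSpace.inner_eq_star_dotProduct]
    simp [he]
  rw [hessianMatrix_testQuadratic] at hpucci
  linarith [le_pucciInf_vecMulVec_sub_smul_one hLam hee hκ hN]

lemma ViscSupersol.le_of_hasSubjet (hs : ViscSupersol lam Lam Ω v) (hlam : 0 ≤ lam)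
    (hLam : lam ≤ Lam) {x₀ : Euc n} (hx₀ : x₀ ∈ Ω) {p e : Euc n} (he : ‖e‖ = 1) {N κ : ℝ}
    (hκ : 0 ≤ κ) (hsub : HasSubjet v Ω x₀ p fun h => N * ⟪e, h⟫_ℝ ^ 2 - κ * ‖h‖ ^ 2) :
    lam * (N - κ) ≤ ((n : ℝ) - 1) * Lam * κ := by
  have hn : (0 : ℝ) ≤ (n : ℝ) - 1 := by
    have hn0 : n ≠ 0 := by
      rintro rfl
      simp [Subsingleton.elim e 0] at he
    have : (1 : ℝ) ≤ n := by exact_mod_cast Nat.one_le_iff_ne_zero.2 hn0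
    linarith
  have hstrict : ∀ κ' > κ, lam * (N - κ') ≤ ((n : ℝ) - 1) * Lam * κ' := by
    intro κ' hκ'
    obtain hN | hN := lt_or_ge N κ'
    · have : 0 ≤ ((n : ℝ) - 1) * Lam * κ' :=
        mul_nonneg (mul_nonneg hn (hlam.trans hLam)) (hκ.trans hκ'.le)
      nlinarith
    · refine hs.testQuadratic_le hLam hx₀ (p := p) he (hκ.trans hκ'.le) hN ?_
      filter_upwards [hsub ((κ' - κ) / 2) (by linarith)] with x hx
      rw [testQuadratic]
      linarith
  have hcont (f : ℝ → ℝ) (hf : Continuous f) : Tendsto f (𝓝[>] κ) (𝓝 (f κ)) :=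
    hf.continuousWithinAt
  exact le_of_tendsto_of_tendsto (hcont (fun κ' => lam * (N - κ')) (by fun_prop))
    (hcont (fun κ' => ((n : ℝ) - 1) * Lam * κ') (by fun_prop))
    (eventually_nhdsWithin_of_forall hstrict)

lemma ViscSupersol.subjetCurvatureLE_add_norm_sq (hs : ViscSupersol lam Lam Ω v) (hlam : 0 < lam)
    (hLam : lam ≤ Lam) {a : ℝ} (ha : 0 ≤ a) :
    SubjetCurvatureLE (fun x => v x + a / 2 * ‖x‖ ^ 2) Ω
      (a * ((lam + ((n : ℝ) - 1) * Lam) / lam)) := by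
  intro x₀ hx₀ p e N he hsub
  have hv : HasSubjet v Ω x₀ (p - a • x₀) fun h => N * ⟪e, h⟫_ℝ ^ 2 - a * ‖h‖ ^ 2 := by
    intro ε hε
    filter_upwards [hsub ε hε] with x hx
    have hnorm : ‖x‖ ^ 2 = ‖x₀‖ ^ 2 + 2 * ⟪x₀, x - x₀⟫_ℝ + ‖x - x₀‖ ^ 2 := by
      rw [← norm_add_sq_real, add_sub_cancel]
    rw [hnorm] at hx
    rw [inner_sub_left, real_inner_smul_left]
    linarith
  have h := hs.le_of_hasSubjet hlam.le hLam hx₀ he ha hv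
  rw [← mul_div_assoc, le_div_iff₀ hlam]
  linarith

end Supersolution

section Taylor

variable {E F : Type*} [NormedAddCommGroup E] [NormedSpace ℝ E] [NormedAddCommGroup F]
  [NormedSpace ℝ F]

lemma taylor_two_isLittleO {f : E → F} {f' : E → E →L[ℝ] F} {f'' : E →L[ℝ] E →L[ℝ] F} {x₀ : E}
    (hf : ∀ᶠ x in 𝓝 x₀, HasFDerivAt f (f' x) x) (hf' : HasFDerivAt f' f'' x₀) :
    (fun x => f x - f x₀ - f' x₀ (x - x₀) - (1 / 2 : ℝ) • f'' (x - x₀) (x - x₀))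
      =o[𝓝 x₀] fun x => ‖x - x₀‖ ^ 2 := by
  set g : E → F := fun x => f x - f' x₀ (x - x₀) - (1 / 2 : ℝ) • f'' (x - x₀) (x - x₀)
  have hg {x : E} (hx : HasFDerivAt f (f' x) x) :
      HasFDerivAt g (f' x - f' x₀ - f'' (x - x₀)) x := by
    have hsub : HasFDerivAt (fun x => x - x₀) (ContinuousLinearMap.id ℝ E) x :=
      (hasFDerivAt_id x).sub_const x₀
    refine ((hx.sub ((f' x₀).hasFDerivAt.comp x hsub)).sub
      (((f''.hasFDerivAt.comp x hsub).clm_apply hsub).const_smul (1 / 2 : ℝ))).congr_fderiv ?_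
    ext h
    change f' x h - f' x₀ h - (1 / 2 : ℝ) • (f'' (x - x₀) h + f'' h (x - x₀))
      = f' x h - f' x₀ h - f'' (x - x₀) h
    rw [second_derivative_symmetric_of_eventually hf hf' h (x - x₀), ← two_smul ℝ, smul_smul]
    norm_num
  refine Asymptotics.isLittleO_iff.2 fun ε hε => ?_
  obtain ⟨δ, hδ, hball⟩ := Metric.eventually_nhds_iff_ball.1
    (hf.and (Asymptotics.isLittleO_iff.1 (hasFDerivAt_iff_isLittleO.1 hf') hε))
  filter_upwards [Metric.ball_mem_nhds x₀ hδ] with x hx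
  have hsubset : closedBall x₀ ‖x - x₀‖ ⊆ ball x₀ δ :=
    closedBall_subset_ball (by rwa [← dist_eq_norm])
  have hbound := Convex.norm_image_sub_le_of_norm_hasFDerivWithin_le
    (C := ε * ‖x - x₀‖) (x := x₀) (y := x)
    (fun y hy => (hg (hball y (hsubset hy)).1).hasFDerivWithinAt)
    (fun y hy => ((hball y (hsubset hy)).2).trans
      (mul_le_mul_of_nonneg_left (mem_closedBall_iff_norm.1 hy) hε.le))
    (convex_closedBall x₀ ‖x - x₀‖) (mem_closedBall_self (norm_nonneg _))
    (mem_closedBall_iff_norm.2 le_rfl)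
  have hgx : g x - g x₀
      = f x - f x₀ - f' x₀ (x - x₀) - (1 / 2 : ℝ) • f'' (x - x₀) (x - x₀) := by
    simp only [g, sub_self, map_zero, smul_zero, sub_zero]
    abel
  rw [hgx] at hbound
  rw [Real.norm_of_nonneg (by positivity : 0 ≤ ‖x - x₀‖ ^ 2)]
  exact hbound.trans_eq (by ring)

end Taylor

/-! ### Proximal maps -/

section Proximal

variable {E : Type*} [NormedAddCommGroup E] [InnerProductSpace ℝ E] {Γ : E → ℝ} {X : E → E}

/-- `X` is the proximal map (resolvent of the subdifferential) of `Γ`. It is encoded by its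
variational inequality: `z - X z` is a subgradient of `Γ` at `X z`. -/
def IsProximalMap (Γ : E → ℝ) (X : E → E) : Prop :=
  ∀ z x, Γ (X z) + ⟪z - X z, x - X z⟫_ℝ ≤ Γ x

/-- The Moreau envelope of `Γ`, written in terms of its proximal map. -/
def moreauEnvelope (Γ : E → ℝ) (X : E → E) (z : E) : ℝ :=
  Γ (X z) + 1 / 2 * ‖z - X z‖ ^ 2

lemma add_inner_le_of_isMin_add_norm_sq (hΓ : ConvexOn ℝ univ Γ) {z x₀ : E}
    (hmin : ∀ x, Γ x₀ + 1 / 2 * ‖x₀ - z‖ ^ 2 ≤ Γ x + 1 / 2 * ‖x - z‖ ^ 2) (x : E) :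
    Γ x₀ + ⟪z - x₀, x - x₀⟫_ℝ ≤ Γ x := by
  have hsegment : ∀ t ∈ Ioc (0 : ℝ) 1,
      Γ x₀ + ⟪z - x₀, x - x₀⟫_ℝ ≤ Γ x + t / 2 * ‖x - x₀‖ ^ 2 := by
    rintro t ⟨ht0, ht1⟩
    have hconv := hΓ.2 (mem_univ x₀) (mem_univ x) (sub_nonneg.2 ht1) ht0.le (by ring)
    have hpoint : (1 - t) • x₀ + t • x - z = t • (x - x₀) - (z - x₀) := by
      rw [sub_smul, one_smul, smul_sub]
      abel
    have hle := hmin ((1 - t) • x₀ + t • x)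
    rw [hpoint, norm_sub_sq_real (t • _), norm_smul, Real.norm_of_nonneg ht0.le,
      real_inner_smul_left, real_inner_comm, norm_sub_rev z] at hle
    rw [smul_eq_mul, smul_eq_mul] at hconv
    refine le_of_mul_le_mul_left ?_ ht0
    linarith
  have hlim : Tendsto (fun t : ℝ => Γ x + t / 2 * ‖x - x₀‖ ^ 2) (𝓝[>] 0) (𝓝 (Γ x)) := by
    have hcont : Continuous fun t : ℝ => Γ x + t / 2 * ‖x - x₀‖ ^ 2 := by fun_prop
    simpa using (hcont.tendsto 0).mono_left nhdsWithin_le_nhds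
  refine ge_of_tendsto hlim ?_
  filter_upwards [Ioc_mem_nhdsGT one_pos] with t ht using hsegment t ht

lemma exists_isProximalMap [FiniteDimensional ℝ E] {K : NNReal} (hΓ : ConvexOn ℝ univ Γ)
    (hlip : LipschitzWith K Γ) : ∃ X, IsProximalMap Γ X := by
  have hmin (z : E) : ∃ x₀, ∀ x,
      Γ x₀ + 1 / 2 * ‖x₀ - z‖ ^ 2 ≤ Γ x + 1 / 2 * ‖x - z‖ ^ 2 := by
    have hcont : Continuous fun x => Γ x + 1 / 2 * ‖x - z‖ ^ 2 := by
      have := hlip.continuous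
      fun_prop
    refine hcont.exists_forall_le' z ?_
    have hfar := (tendsto_dist_right_cocompact_atTop z).eventually_ge_atTop (2 * (K : ℝ))
    filter_upwards [hfar] with x hx
    rw [dist_eq_norm] at hx
    have hle := (abs_le.1 ((Real.norm_eq_abs _).symm.trans_le (hlip.norm_sub_le x z))).1
    simp only [sub_self, norm_zero]
    nlinarith
  choose X hX using hmin
  exact ⟨X, fun z => add_inner_le_of_isMin_add_norm_sq hΓ (hX z)⟩

namespace IsProximalMap

lemma inner_nonneg (hX : IsProximalMap Γ X) (z z' : E) :
    0 ≤ ⟪(z - X z) - (z' - X z'), X z - X z'⟫_ℝ := by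
  have h := hX z (X z')
  have h' := hX z' (X z)
  rw [← neg_sub (X z) (X z'), inner_neg_right] at h
  rw [inner_sub_left]
  linarith

lemma norm_sub_sq_add_le (hX : IsProximalMap Γ X) (z z' : E) :
    ‖X z - X z'‖ ^ 2 + ‖(z - X z) - (z' - X z')‖ ^ 2 ≤ ‖z - z'‖ ^ 2 := by
  have hz : z - z' = (z - X z) - (z' - X z') + (X z - X z') := by abel
  rw [hz, norm_add_sq_real]
  linarith [hX.inner_nonneg z z']

lemma lipschitzWith (hX : IsProximalMap Γ X) : LipschitzWith 1 X := by
  refine LipschitzWith.of_dist_le_mul fun z z' => ?_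
  rw [NNReal.coe_one, one_mul, dist_eq_norm, dist_eq_norm]
  refine (pow_le_pow_iff_left₀ (norm_nonneg _) (norm_nonneg _) two_ne_zero).1 ?_
  nlinarith [hX.norm_sub_sq_add_le z z']

lemma lipschitzWith_sub (hX : IsProximalMap Γ X) : LipschitzWith 1 fun z => z - X z := by
  refine LipschitzWith.of_dist_le_mul fun z z' => ?_
  rw [NNReal.coe_one, one_mul, dist_eq_norm, dist_eq_norm]
  refine (pow_le_pow_iff_left₀ (norm_nonneg _) (norm_nonneg _) two_ne_zero).1 ?_
  nlinarith [hX.norm_sub_sq_add_le z z']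

lemma moreauEnvelope_le (hX : IsProximalMap Γ X) (z x : E) :
    moreauEnvelope Γ X z ≤ Γ x + 1 / 2 * ‖z - x‖ ^ 2 := by
  have hexpand := norm_sub_sq_real (z - X z) (x - X z)
  rw [sub_sub_sub_cancel_right] at hexpand
  rw [moreauEnvelope, hexpand]
  nlinarith [hX z x, sq_nonneg ‖x - X z‖]

lemma moreauEnvelope_sub_le (hX : IsProximalMap Γ X) (z z' : E) :
    moreauEnvelope Γ X z' - moreauEnvelope Γ X z
      ≤ ⟪z - X z, z' - z⟫_ℝ + 1 / 2 * ‖z' - z‖ ^ 2 := by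
  have h := hX.moreauEnvelope_le z' (X z)
  rw [← sub_add_sub_cancel z' z (X z), norm_add_sq_real, real_inner_comm] at h
  simp only [moreauEnvelope] at h ⊢
  linarith

lemma hasFDerivAt_moreauEnvelope (hX : IsProximalMap Γ X) (z : E) :
    HasFDerivAt (moreauEnvelope Γ X) (innerSL ℝ (z - X z)) z := by
  rw [hasFDerivAt_iff_isLittleO]
  refine Asymptotics.IsBigO.trans_isLittleO (g := fun z' => ‖z' - z‖ ^ 2) ?_ ?_
  · refine Asymptotics.IsBigO.of_bound 2 (Eventually.of_forall fun z' => ?_)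
    rw [innerSL_apply_apply, Real.norm_eq_abs, norm_pow, norm_norm, abs_le]
    have hup := hX.moreauEnvelope_sub_le z z'
    have hlow := hX.moreauEnvelope_sub_le z' z
    have hgrad := hX.lipschitzWith_sub.dist_le_mul z z'
    rw [NNReal.coe_one, one_mul, dist_eq_norm, dist_eq_norm, norm_sub_rev z] at hgrad
    have hcs := (real_inner_le_norm ((z - X z) - (z' - X z')) (z' - z)).trans
      (mul_le_mul_of_nonneg_right hgrad (norm_nonneg _))
    rw [inner_sub_left] at hcs
    rw [← neg_sub z' z, inner_neg_right, norm_neg] at hlow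
    constructor <;> nlinarith [sq_nonneg ‖z' - z‖]
  · exact Asymptotics.isLittleO_pow_sub_sub z one_lt_two

end IsProximalMap

lemma mul_inner_sq_le_inner_apply_self {T : E →L[ℝ] E} (hT : (T : E →ₗ[ℝ] E).IsPositive) {t : ℝ}
    {u : E} (hu : ‖u‖ = 1) (htu : T u = t • u) (h : E) : t * ⟪u, h⟫_ℝ ^ 2 ≤ ⟪T h, h⟫_ℝ := by
  have hpos := hT.re_inner_nonneg_left (h - ⟪u, h⟫_ℝ • u)
  have hTh : ⟪T h, u⟫_ℝ = t * ⟪u, h⟫_ℝ := by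
    have hsymm : ⟪T h, u⟫_ℝ = ⟪h, T u⟫_ℝ := hT.isSymmetric h u
    rw [hsymm, htu, real_inner_smul_right, real_inner_comm]
  simp only [ContinuousLinearMap.coe_coe, map_sub, map_smul, inner_sub_left, inner_sub_right,
    real_inner_smul_left, real_inner_smul_right, hTh, htu, real_inner_self_eq_norm_sq, hu,
    RCLike.re_to_real] at hpos
  linarith

/-- The linear map acting as `κ` on the direction `u` and as the identity on its orthogonal
complement (for `‖u‖ = 1`). -/
def stretch (u : E) (κ : ℝ) : E →L[ℝ] E :=
  ContinuousLinearMap.id ℝ E + ((κ - 1) • innerSL ℝ u).smulRight u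

lemma stretch_apply (u : E) (κ : ℝ) (h : E) : stretch u κ h = h + ((κ - 1) * ⟪u, h⟫_ℝ) • u := rfl

lemma det_eq_prod_of_apply_basis {R V ι : Type*} [CommRing R] [TopologicalSpace V]
    [AddCommGroup V] [Module R V] [Fintype ι] (b : Module.Basis ι R V) (T : V →L[R] V) {μ : ι → R}
    (h : ∀ i, T (b i) = μ i • b i) : T.det = ∏ i, μ i := by
  classical
  have hdiag : LinearMap.toMatrix b b (T : V →ₗ[R] V) = Matrix.diagonal μ := by
    ext i j
    obtain rfl | hij := eq_or_ne i j
    · simp [LinearMap.toMatrix_apply, h]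
    · simp [LinearMap.toMatrix_apply, h, hij]
  rw [ContinuousLinearMap.det, ← LinearMap.det_toMatrix b, hdiag, Matrix.det_diagonal]

namespace IsProximalMap

variable {S : E →L[ℝ] E} {z₀ : E}

lemma hasFDerivAt_innerSL_sub (hS : HasFDerivAt X S z₀) :
    HasFDerivAt (fun z => innerSL ℝ (z - X z))
      ((innerSL ℝ : E →L[ℝ] E →L[ℝ] ℝ).comp (ContinuousLinearMap.id ℝ E - S)) z₀ :=
  (innerSL ℝ : E →L[ℝ] E →L[ℝ] ℝ).hasFDerivAt.comp z₀ ((hasFDerivAt_id z₀).sub hS)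

lemma isPositive_id_sub_fderiv (hX : IsProximalMap Γ X) (hS : HasFDerivAt X S z₀) :
    ((ContinuousLinearMap.id ℝ E - S : E →L[ℝ] E) : E →ₗ[ℝ] E).IsPositive := by
  refine ⟨fun h k => ?_, fun h => ?_⟩
  · have hsymm := second_derivative_symmetric_of_eventually
      (Eventually.of_forall hX.hasFDerivAt_moreauEnvelope) (hasFDerivAt_innerSL_sub hS) h k
    exact hsymm.trans (real_inner_comm _ _)
  · have hnorm : ‖S‖ ≤ 1 := hS.le_of_lipschitz hX.lipschitzWith
    have hcs := real_inner_le_norm (S h) h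
    have hle := mul_le_mul_of_nonneg_right (S.le_of_opNorm_le hnorm h) (norm_nonneg h)
    change 0 ≤ ⟪h - S h, h⟫_ℝ
    rw [inner_sub_left, real_inner_self_eq_norm_sq]
    linarith

lemma moreauEnvelope_taylor (hX : IsProximalMap Γ X) (hS : HasFDerivAt X S z₀) :
    (fun z => moreauEnvelope Γ X z - moreauEnvelope Γ X z₀ - ⟪z₀ - X z₀, z - z₀⟫_ℝ
      - 1 / 2 * ⟪(z - z₀) - S (z - z₀), z - z₀⟫_ℝ) =o[𝓝 z₀] fun z => ‖z - z₀‖ ^ 2 :=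
  taylor_two_isLittleO (Eventually.of_forall hX.hasFDerivAt_moreauEnvelope)
    (hasFDerivAt_innerSL_sub hS)

lemma moreauEnvelope_taylor_comp (hX : IsProximalMap Γ X) (hS : HasFDerivAt X S z₀)
    (k : E →L[ℝ] E) :
    (fun x => moreauEnvelope Γ X (z₀ + k (x - X z₀)) - moreauEnvelope Γ X z₀
      - ⟪z₀ - X z₀, k (x - X z₀)⟫_ℝ
      - 1 / 2 * ⟪k (x - X z₀) - S (k (x - X z₀)), k (x - X z₀)⟫_ℝ)
      =o[𝓝 (X z₀)] fun x => ‖x - X z₀‖ ^ 2 := by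
  have hlim : Tendsto (fun x => z₀ + k (x - X z₀)) (𝓝 (X z₀)) (𝓝 z₀) := by
    have hcont : Continuous fun x => z₀ + k (x - X z₀) := by fun_prop
    simpa using hcont.tendsto (X z₀)
  have hcomp := (hX.moreauEnvelope_taylor hS).comp_tendsto hlim
  simp only [Function.comp_def, add_sub_cancel_left] at hcomp
  have hk : (fun x => k (x - X z₀)) =O[𝓝 (X z₀)] fun x => x - X z₀ := k.isBigO_comp _ _
  exact hcomp.trans_isBigO (hk.norm_norm.pow 2)

lemma le_inner_stretch (hX : IsProximalMap Γ X) (hS : HasFDerivAt X S z₀) {u : E} (hu : ‖u‖ = 1)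
    {s : ℝ} (hsu : S u = s • u) (κ : ℝ) (h : E) :
    (2 * κ - s * κ ^ 2 - 1) * ⟪u, h⟫_ℝ ^ 2 + ((κ - 1) * ⟪u, h⟫_ℝ) ^ 2
      ≤ ⟪stretch u κ h - S (stretch u κ h), stretch u κ h⟫_ℝ := by
  have hpos := hX.isPositive_id_sub_fderiv hS
  have heig : (ContinuousLinearMap.id ℝ E - S) u = (1 - s) • u := by
    rw [sub_smul, one_smul, ← hsu]
    rfl
  have hle : (1 - s) * ⟪u, h⟫_ℝ ^ 2 ≤ ⟪h - S h, h⟫_ℝ :=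
    mul_inner_sq_le_inner_apply_self hpos hu heig h
  have hcross : ⟪h - S h, u⟫_ℝ = (1 - s) * ⟪u, h⟫_ℝ := by
    have hsymm : ⟪h - S h, u⟫_ℝ = ⟪h, (ContinuousLinearMap.id ℝ E - S) u⟫_ℝ :=
      hpos.isSymmetric h u
    rw [hsymm, heig, real_inner_smul_right, real_inner_comm]
  have hstretch : stretch u κ h - S (stretch u κ h)
      = (h - S h) + ((κ - 1) * ⟪u, h⟫_ℝ * (1 - s)) • u := by
    rw [stretch_apply, map_add, map_smul, hsu, smul_smul, mul_sub, sub_smul, mul_one]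
    abel
  rw [hstretch, stretch_apply]
  simp only [inner_add_left, inner_add_right, real_inner_smul_left, real_inner_smul_right,
    hcross, real_inner_self_eq_norm_sq, hu]
  linarith

-- The stretch `κ = 1 / s` would be optimal; leaving `κ` free covers `s = 0` as well.
lemma hasSubjet_of_eigenvector (hX : IsProximalMap Γ X) (hS : HasFDerivAt X S z₀) {u : E}
    (hu : ‖u‖ = 1) {s : ℝ} (hsu : S u = s • u) (κ : ℝ) :
    HasSubjet Γ univ (X z₀) (z₀ - X z₀) fun h => (2 * κ - s * κ ^ 2 - 1) * ⟪u, h⟫_ℝ ^ 2 := by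
  intro ε hε
  rw [nhdsWithin_univ]
  filter_upwards [(hX.moreauEnvelope_taylor_comp hS (stretch u κ)).bound hε] with x hx
  rw [norm_pow, norm_norm, Real.norm_eq_abs, abs_le] at hx
  have hle := hX.moreauEnvelope_le (z₀ + stretch u κ (x - X z₀)) x
  have hdisp : z₀ + stretch u κ (x - X z₀) - x
      = (z₀ - X z₀) + ((κ - 1) * ⟪u, x - X z₀⟫_ℝ) • u := by
    rw [stretch_apply]
    abel
  rw [hdisp, norm_add_sq_real, norm_smul, hu, mul_one, real_inner_smul_right, Real.norm_eq_abs,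
    sq_abs] at hle
  have hinner : ⟪z₀ - X z₀, stretch u κ (x - X z₀)⟫_ℝ
      = ⟪z₀ - X z₀, x - X z₀⟫_ℝ + (κ - 1) * ⟪u, x - X z₀⟫_ℝ * ⟪z₀ - X z₀, u⟫_ℝ := by
    rw [stretch_apply, inner_add_right, real_inner_smul_right]
  rw [hinner, moreauEnvelope.eq_1 Γ X z₀] at hx
  linarith [hX.le_inner_stretch hS hu hsu κ (x - X z₀), hx.1]

variable {ψ : E → ℝ} {Ω : Set E} {L : ℝ}

lemma eigenvalue_bounds_of_contact (hX : IsProximalMap Γ X) (hS : HasFDerivAt X S z₀)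
    (hψ : SubjetCurvatureLE ψ Ω L) (hL : 0 ≤ L) (hle : ∀ x ∈ Ω, Γ x ≤ ψ x) (hmem : X z₀ ∈ Ω)
    (hcontact : Γ (X z₀) = ψ (X z₀)) {u : E} (hu : ‖u‖ = 1) {s : ℝ} (hsu : S u = s • u) :
    s ≤ 1 ∧ 1 - s ≤ L * s := by
  constructor
  · have hnorm : ‖S‖ ≤ 1 := hS.le_of_lipschitz hX.lipschitzWith
    have := S.le_of_opNorm_le hnorm u
    rw [hsu, norm_smul, hu, mul_one, mul_one] at this
    exact (le_abs_self s).trans this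
  · have hN := hψ _ hmem _ _ _ hu
      ((hX.hasSubjet_of_eigenvector hS hu hsu (1 + L)).mono (subset_univ Ω) hle hcontact)
    nlinarith

lemma abs_det_sub_le_of_contact [FiniteDimensional ℝ E] (hX : IsProximalMap Γ X)
    (hS : HasFDerivAt X S z₀) (hψ : SubjetCurvatureLE ψ Ω L) (hL : 0 ≤ L)
    (hle : ∀ x ∈ Ω, Γ x ≤ ψ x) (hmem : X z₀ ∈ Ω) (hcontact : Γ (X z₀) = ψ (X z₀)) :
    |(ContinuousLinearMap.id ℝ E - S).det| ≤ L ^ Module.finrank ℝ E * |S.det| := by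
  have hsymm : (S : E →ₗ[ℝ] E).IsSymmetric := by
    have h := (LinearMap.IsSymmetric.id (𝕜 := ℝ) (E := E)).sub
      (hX.isPositive_id_sub_fderiv hS).isSymmetric
    simpa using h
  set b := hsymm.eigenvectorBasis rfl
  set s := hsymm.eigenvalues rfl
  have hS_b (i) : S (b i) = s i • b i := hsymm.apply_eigenvectorBasis rfl i
  have hbounds (i) := hX.eigenvalue_bounds_of_contact hS hψ hL hle hmem hcontact
    (b.orthonormal.1 i) (hS_b i)
  rw [det_eq_prod_of_apply_basis b.toBasis S (by simpa using hS_b),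
    det_eq_prod_of_apply_basis b.toBasis (ContinuousLinearMap.id ℝ E - S)
      (μ := fun i => 1 - s i) (by simp [hS_b, sub_smul]), Finset.abs_prod, Finset.abs_prod]
  calc ∏ i, |1 - s i| ≤ ∏ i, L * |s i| := by
        refine Finset.prod_le_prod (fun i _ => abs_nonneg _) fun i _ => ?_
        rw [abs_of_nonneg (sub_nonneg.2 (hbounds i).1)]
        exact (hbounds i).2.trans (mul_le_mul_of_nonneg_left (le_abs_self _) hL)
    _ = L ^ Module.finrank ℝ E * ∏ i, |s i| := by
        rw [Finset.prod_mul_distrib, Finset.prod_const, Finset.card_univ, Fintype.card_fin]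

end IsProximalMap

end Proximal

/-! ### Contact sets and the area formula -/

section Subgradient

variable {E : Type*} [NormedAddCommGroup E] [InnerProductSpace ℝ E] {ψ Γ : E → ℝ} {X : E → E}
  {Ω F B : Set E} {x y : E}

/-- `y` is a subgradient at `x` of the restriction of `ψ` to `Ω`. -/
def IsSubgradientOn (ψ : E → ℝ) (Ω : Set E) (x y : E) : Prop :=
  ∀ x' ∈ Ω, ψ x + ⟪y, x' - x⟫_ℝ ≤ ψ x'

/-- The pairs (contact point, slope) in `F × B` of affine functions supporting `ψ` on `Ω`. -/
def contactPairs (ψ : E → ℝ) (Ω F B : Set E) : Set (E × E) :=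
  {q ∈ F ×ˢ B | IsSubgradientOn ψ Ω q.1 q.2}

lemma isCompact_contactPairs (hψ : ContinuousOn ψ Ω) (hF : IsCompact F) (hB : IsCompact B)
    (hFΩ : F ⊆ Ω) : IsCompact (contactPairs ψ Ω F B) := by
  have hFB := hF.prod hB
  have hcont (x' : E) :
      ContinuousOn (fun q : E × E => ψ q.1 + ⟪q.2, x' - q.1⟫_ℝ) (F ×ˢ B) := by
    have hfst : ContinuousOn (fun q : E × E => ψ q.1) (F ×ˢ B) :=
      hψ.comp continuousOn_fst fun q hq => hFΩ hq.1
    exact hfst.add (Continuous.continuousOn (by fun_prop))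
  have heq : contactPairs ψ Ω F B = F ×ˢ B ∩ ⋂ x' ∈ Ω,
      (F ×ˢ B ∩ (fun q : E × E => ψ q.1 + ⟪q.2, x' - q.1⟫_ℝ) ⁻¹' Iic (ψ x')) := by
    ext q
    simp only [contactPairs, IsSubgradientOn, mem_ofPred_eq, mem_inter_iff, mem_iInter,
      mem_preimage, mem_Iic]
    exact ⟨fun h => ⟨h.1, fun x' hx' => ⟨h.1, h.2 x' hx'⟩⟩,
      fun h => ⟨h.1, fun x' hx' => (h.2 x' hx').2⟩⟩
  rw [heq]
  exact hFB.inter_right (isClosed_biInter fun x' _ =>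
    (hcont x').preimage_isClosed_of_isClosed hFB.isClosed isClosed_Iic)

/-- The supremum of the affine functions which support `ψ` at the points, and with the slopes,
given by the pairs in `P`. -/
def affineEnvelope (ψ : E → ℝ) (P : Set (E × E)) (x : E) : ℝ :=
  ⨆ q : P, (ψ q.1.1 + ⟪q.1.2, x - q.1.1⟫_ℝ)

section AffineEnvelope

variable {P : Set (E × E)} {R : NNReal}

lemma bddAbove_range_affine (hP : ∀ q ∈ P, q.1 ∈ Ω ∧ IsSubgradientOn ψ Ω q.1 q.2)
    (hR : ∀ q ∈ P, ‖q.2‖ ≤ R) (x : E) :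
    BddAbove (range fun q : P => ψ q.1.1 + ⟪q.1.2, x - q.1.1⟫_ℝ) := by
  obtain hempty | ⟨q₀, hq₀⟩ := P.eq_empty_or_nonempty
  · subst hempty
    simp [range_eq_empty]
  refine ⟨ψ q₀.1 + R * ‖x - q₀.1‖, ?_⟩
  rintro _ ⟨⟨q, hq⟩, rfl⟩
  have hsupport := (hP q hq).2 q₀.1 (hP q₀ hq₀).1
  have hslope : ⟪q.2, x - q₀.1⟫_ℝ ≤ R * ‖x - q₀.1‖ :=
    (real_inner_le_norm _ _).trans (mul_le_mul_of_nonneg_right (hR q hq) (norm_nonneg _))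
  have hsplit : ⟪q.2, x - q.1⟫_ℝ = ⟪q.2, x - q₀.1⟫_ℝ + ⟪q.2, q₀.1 - q.1⟫_ℝ := by
    rw [← inner_add_right, sub_add_sub_cancel]
  simp only [hsplit]
  linarith

lemma affine_le_affineEnvelope (hP : ∀ q ∈ P, q.1 ∈ Ω ∧ IsSubgradientOn ψ Ω q.1 q.2)
    (hR : ∀ q ∈ P, ‖q.2‖ ≤ R) {q : E × E} (hq : q ∈ P) (x : E) :
    ψ q.1 + ⟪q.2, x - q.1⟫_ℝ ≤ affineEnvelope ψ P x :=
  le_ciSup (f := fun q : P => ψ q.1.1 + ⟪q.1.2, x - q.1.1⟫_ℝ)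
    (bddAbove_range_affine hP hR x) ⟨q, hq⟩

lemma affineEnvelope_le (hP : ∀ q ∈ P, IsSubgradientOn ψ Ω q.1 q.2) (hne : P.Nonempty)
    (hx : x ∈ Ω) : affineEnvelope ψ P x ≤ ψ x := by
  have := hne.to_subtype
  exact ciSup_le fun q => hP q.1 q.2 x hx

lemma affineEnvelope_eq (hP : ∀ q ∈ P, q.1 ∈ Ω ∧ IsSubgradientOn ψ Ω q.1 q.2)
    (hR : ∀ q ∈ P, ‖q.2‖ ≤ R) {q : E × E} (hq : q ∈ P) : affineEnvelope ψ P q.1 = ψ q.1 :=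
  (affineEnvelope_le (fun q hq => (hP q hq).2) ⟨q, hq⟩ (hP q hq).1).antisymm
    (by simpa using affine_le_affineEnvelope hP hR hq q.1)

lemma convexOn_affineEnvelope (hP : ∀ q ∈ P, q.1 ∈ Ω ∧ IsSubgradientOn ψ Ω q.1 q.2)
    (hR : ∀ q ∈ P, ‖q.2‖ ≤ R) (hne : P.Nonempty) : ConvexOn ℝ univ (affineEnvelope ψ P) := by
  have := hne.to_subtype
  refine ⟨convex_univ, fun x _ x' _ s t hs ht hst => ciSup_le fun q => ?_⟩
  have hx := mul_le_mul_of_nonneg_left (affine_le_affineEnvelope hP hR q.2 x) hs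
  have hx' := mul_le_mul_of_nonneg_left (affine_le_affineEnvelope hP hR q.2 x') ht
  have hs' : s = 1 - t := by linarith
  simp only [smul_eq_mul, inner_sub_right, inner_add_right, real_inner_smul_right] at hx hx' ⊢
  subst hs'
  linarith

lemma lipschitzWith_affineEnvelope (hP : ∀ q ∈ P, q.1 ∈ Ω ∧ IsSubgradientOn ψ Ω q.1 q.2)
    (hR : ∀ q ∈ P, ‖q.2‖ ≤ R) (hne : P.Nonempty) : LipschitzWith R (affineEnvelope ψ P) := by
  have := hne.to_subtype
  refine LipschitzWith.of_le_add_mul R fun x x' => ciSup_le fun q => ?_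
  have hx' := affine_le_affineEnvelope hP hR q.2 x'
  have hslope : ⟪q.1.2, x - x'⟫_ℝ ≤ R * dist x x' := by
    rw [dist_eq_norm]
    exact (real_inner_le_norm _ _).trans (mul_le_mul_of_nonneg_right (hR q q.2) (norm_nonneg _))
  simp only [inner_sub_right] at hx' hslope ⊢
  linarith

end AffineEnvelope

lemma IsProximalMap.apply_add (hX : IsProximalMap Γ X) (hy : IsSubgradientOn Γ univ x y) :
    X (x + y) = x := by
  have hprox := hX (x + y) x
  have hsub := hy (X (x + y)) trivial
  have hsplit : ⟪x + y - X (x + y), x - X (x + y)⟫_ℝ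
      = ‖x - X (x + y)‖ ^ 2 - ⟪y, X (x + y) - x⟫_ℝ := by
    rw [add_sub_right_comm, inner_add_left, real_inner_self_eq_norm_sq, ← neg_sub x (X _),
      inner_neg_right, sub_neg_eq_add]
  have hzero : ‖x - X (x + y)‖ ^ 2 = 0 := le_antisymm (by linarith) (sq_nonneg _)
  exact (sub_eq_zero.1 (norm_eq_zero.1 (pow_eq_zero_iff two_ne_zero |>.1 hzero))).symm

/-- A function with two subgradients at a point is bent there along their difference, and this
corner admits test functions of arbitrarily large curvature. -/
lemma SubjetCurvatureLE.subgradient_unique {L : ℝ} (hψ : SubjetCurvatureLE ψ Ω L) (hx : x ∈ Ω)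
    {p q : E} (hp : IsSubgradientOn ψ Ω x p) (hq : IsSubgradientOn ψ Ω x q) : p = q := by
  by_contra hpq
  set d := ‖p - q‖
  have hd : 0 < d := norm_sub_pos_iff.2 hpq
  set e := d⁻¹ • (p - q)
  have he : ‖e‖ = 1 := by
    rw [norm_smul, norm_inv, norm_norm, inv_mul_cancel₀ hd.ne']
  have hde (h : E) : d * ⟪e, h⟫_ℝ = ⟪p, h⟫_ℝ - ⟪q, h⟫_ℝ := by
    rw [real_inner_smul_left, mul_inv_cancel_left₀ hd.ne', inner_sub_left]
  set N := max (L + 1) 1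
  have hN : 0 < N := one_pos.trans_le (le_max_right _ _)
  have hcorner : HasSubjet ψ Ω x ((1 / 2 : ℝ) • (p + q)) fun h => N * ⟪e, h⟫_ℝ ^ 2 := by
    intro ε hε
    filter_upwards [mem_nhdsWithin_of_mem_nhds (ball_mem_nhds x (div_pos hd hN)),
      self_mem_nhdsWithin] with x' hball hx'
    have hnear : N * |⟪e, x' - x⟫_ℝ| ≤ d := by
      have hle := abs_real_inner_le_norm e (x' - x)
      rw [he, one_mul] at hle
      rw [mem_ball_iff_norm, lt_div_iff₀ hN] at hball
      nlinarith
    have hquad : N * ⟪e, x' - x⟫_ℝ ^ 2 ≤ |⟪p, x' - x⟫_ℝ - ⟪q, x' - x⟫_ℝ| := by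
      rw [← hde, abs_mul, abs_of_pos hd, ← sq_abs, sq, ← mul_assoc]
      exact mul_le_mul_of_nonneg_right hnear (abs_nonneg _)
    have hp' := hp x' hx'
    have hq' := hq x' hx'
    have hsq : 0 ≤ ε * ‖x' - x‖ ^ 2 := by positivity
    rw [real_inner_smul_left, inner_add_left]
    cases abs_cases (⟪p, x' - x⟫_ℝ - ⟪q, x' - x⟫_ℝ) <;> linarith
  linarith [hψ x hx _ e N he hcorner, le_max_left (L + 1) 1]

end Subgradient

section AreaFormula

variable {E : Type*} [NormedAddCommGroup E] [NormedSpace ℝ E] [FiniteDimensional ℝ E]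
  [MeasurableSpace E] [BorelSpace E] {μ : Measure E} [μ.IsAddHaarMeasure] {K : NNReal}

lemma measure_image_eq_zero_of_lipschitzWith {f : E → E} (hf : LipschitzWith K f) {s : Set E}
    (hs : μ s = 0) : μ (f '' s) = 0 := by
  set ν : Measure E := μH[Module.finrank ℝ E]
  have hμν : μ ≪ ν := Measure.absolutelyContinuous_isAddHaarMeasure _ _
  have hνμ : ν ≪ μ := Measure.absolutelyContinuous_isAddHaarMeasure _ _
  have hle := hf.hausdorffMeasure_image_le (d := Module.finrank ℝ E) (Nat.cast_nonneg _) s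
  refine hμν (le_antisymm (hle.trans_eq ?_) bot_le)
  rw [hνμ hs, mul_zero]

lemma measure_image_sub_le {X : E → E} (hX : LipschitzWith K X) {Z : Set E}
    (hZ : MeasurableSet Z) (hinj : InjOn X Z) {C : ℝ} (hC : 0 ≤ C)
    (hdet : ∀ z ∈ Z, ∀ S, HasFDerivAt X S z →
      |(ContinuousLinearMap.id ℝ E - S).det| ≤ C * |S.det|) :
    μ ((fun z => z - X z) '' Z) ≤ ENNReal.ofReal C * μ (X '' Z) := by
  set D := {z | DifferentiableAt ℝ X z}
  have hZD : MeasurableSet (Z ∩ D) := hZ.inter (measurableSet_of_differentiableAt ℝ X)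
  have hnull : μ ((fun z => z - X z) '' (Z \ D)) = 0 := by
    refine measure_image_eq_zero_of_lipschitzWith (LipschitzWith.id.sub hX) ?_
    exact measure_mono_null (fun z hz => hz.2) (ae_iff.1 (hX.ae_differentiableAt (μ := μ)))
  have hX' (z) (hz : z ∈ Z ∩ D) : HasFDerivAt X (fderiv ℝ X z) z := hz.2.hasFDerivAt
  calc μ ((fun z => z - X z) '' Z)
      ≤ μ ((fun z => z - X z) '' (Z ∩ D)) + μ ((fun z => z - X z) '' (Z \ D)) := by
        nth_rewrite 1 [← inter_union_sdiff (s := Z) (t := D)]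
        rw [image_union]
        exact measure_union_le _ _
    _ = μ ((fun z => z - X z) '' (Z ∩ D)) := by rw [hnull, add_zero]
    _ ≤ ∫⁻ z in Z ∩ D, ENNReal.ofReal |(ContinuousLinearMap.id ℝ E - fderiv ℝ X z).det| ∂μ :=
        addHaar_image_le_lintegral_abs_det_fderiv μ hZD fun z hz =>
          ((hasFDerivAt_id z).sub (hX' z hz)).hasFDerivWithinAt
    _ ≤ ∫⁻ z in Z ∩ D, ENNReal.ofReal C * ENNReal.ofReal |(fderiv ℝ X z).det| ∂μ := by
        refine setLIntegral_mono' hZD fun z hz => ?_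
        rw [← ENNReal.ofReal_mul hC]
        exact ENNReal.ofReal_le_ofReal (hdet z hz.1 _ (hX' z hz))
    _ = ENNReal.ofReal C * ∫⁻ z in Z ∩ D, ENNReal.ofReal |(fderiv ℝ X z).det| ∂μ :=
        lintegral_const_mul' _ _ ENNReal.ofReal_ne_top
    _ = ENNReal.ofReal C * μ (X '' (Z ∩ D)) := by
        rw [lintegral_abs_det_fderiv_eq_addHaar_image μ hZD
          (fun z hz => (hX' z hz).hasFDerivWithinAt) (hinj.mono inter_subset_left)]
    _ ≤ ENNReal.ofReal C * μ (X '' Z) := by gcongr; exact inter_subset_left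

end AreaFormula

section ContactSet

variable {E : Type*} [NormedAddCommGroup E] [InnerProductSpace ℝ E] [FiniteDimensional ℝ E]
  {ψ : E → ℝ} {Ω F B : Set E} {L : ℝ}

lemma exists_isProximalMap_of_contactPairs (hB : IsCompact B) (hFΩ : F ⊆ Ω)
    (hne : (contactPairs ψ Ω F B).Nonempty) :
    ∃ Γ X, IsProximalMap Γ X ∧ (∀ x ∈ Ω, Γ x ≤ ψ x) ∧
      ∀ q ∈ contactPairs ψ Ω F B, X (q.1 + q.2) = q.1 ∧ Γ q.1 = ψ q.1 := by
  set P := contactPairs ψ Ω F B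
  have hP : ∀ q ∈ P, q.1 ∈ Ω ∧ IsSubgradientOn ψ Ω q.1 q.2 := fun q hq => ⟨hFΩ hq.1.1, hq.2⟩
  obtain ⟨R, hR⟩ : ∃ R : NNReal, ∀ q ∈ P, ‖q.2‖ ≤ R := by
    obtain ⟨R, hR⟩ := hB.isBounded.exists_norm_le
    exact ⟨R.toNNReal, fun q hq => (hR q.2 hq.1.2).trans (Real.le_coe_toNNReal R)⟩
  obtain ⟨X, hX⟩ := exists_isProximalMap (convexOn_affineEnvelope hP hR hne)
    (lipschitzWith_affineEnvelope hP hR hne)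
  have heq : ∀ q ∈ P, affineEnvelope ψ P q.1 = ψ q.1 := fun q hq => affineEnvelope_eq hP hR hq
  refine ⟨_, X, hX, fun x hx => affineEnvelope_le (fun q hq => (hP q hq).2) hne hx,
    fun q hq => ⟨hX.apply_add fun x' _ => ?_, heq q hq⟩⟩
  rw [heq q hq]
  exact affine_le_affineEnvelope hP hR hq x'

/-- The area formula is applied to the proximal map `X` of the affine envelope `Γ`, at the points
`x + y` with `y` a slope of contact at `x`: there `X` recovers `x` and `id - X` recovers `y`. -/
lemma volume_le_mul_volume_contactSet [MeasurableSpace E] [BorelSpace E]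
    (hψ : SubjetCurvatureLE ψ Ω L) (hL : 0 ≤ L) (hcont : ContinuousOn ψ Ω) (hF : IsCompact F)
    (hB : IsCompact B) (hFΩ : F ⊆ Ω) (hslopes : ∀ y ∈ B, ∃ x ∈ F, IsSubgradientOn ψ Ω x y) :
    volume B ≤ ENNReal.ofReal (L ^ Module.finrank ℝ E) *
      volume {x ∈ F | ∃ y, IsSubgradientOn ψ Ω x y} := by
  set P := contactPairs ψ Ω F B
  obtain hempty | hne := P.eq_empty_or_nonempty
  · have hB_empty : B = ∅ := eq_empty_of_forall_notMem fun y hy => by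
      obtain ⟨x, hx, hxy⟩ := hslopes y hy
      exact hempty.subset (⟨⟨hx, hy⟩, hxy⟩ : (x, y) ∈ P)
    simp [hB_empty]
  obtain ⟨Γ, X, hX, hΓ, hXP⟩ := exists_isProximalMap_of_contactPairs hB hFΩ hne
  set Z := (fun q : E × E => q.1 + q.2) '' P
  have hZ : MeasurableSet Z :=
    ((isCompact_contactPairs hcont hF hB hFΩ).image (by fun_prop)).measurableSet
  have hinj : InjOn X Z := by
    rintro _ ⟨⟨x, y⟩, hq, rfl⟩ _ ⟨⟨x', y'⟩, hq', rfl⟩ heq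
    obtain rfl : x = x' := by simpa only [(hXP _ hq).1, (hXP _ hq').1] using heq
    obtain rfl : y = y' := hψ.subgradient_unique (hFΩ hq.1.1) hq.2 hq'.2
    rfl
  have hdet : ∀ z ∈ Z, ∀ S, HasFDerivAt X S z →
      |(ContinuousLinearMap.id ℝ E - S).det| ≤ L ^ Module.finrank ℝ E * |S.det| := by
    rintro _ ⟨q, hq, rfl⟩ S hS
    exact hX.abs_det_sub_le_of_contact hS hψ hL hΓ
      ((hXP q hq).1.symm ▸ hFΩ hq.1.1) ((hXP q hq).1.symm ▸ (hXP q hq).2)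
  refine (measure_mono fun y hy => ?_).trans ((measure_image_sub_le hX.lipschitzWith hZ hinj
    (pow_nonneg hL _) hdet).trans (mul_le_mul_right (measure_mono ?_) _))
  · obtain ⟨x, hx, hxy⟩ := hslopes y hy
    have hq : (x, y) ∈ P := ⟨⟨hx, hy⟩, hxy⟩
    exact ⟨x + y, ⟨_, hq, rfl⟩, sub_eq_of_eq_add' (by rw [(hXP _ hq).1])⟩
  · rintro _ ⟨_, ⟨q, hq, rfl⟩, rfl⟩
    simp only [(hXP q hq).1]
    exact ⟨hq.1.1, q.2, hq.2⟩

end ContactSet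

/-! ### Touching by paraboloids of fixed opening -/

lemma exists_isSubgradientOn_of_mem_closedBall {E : Type*} [NormedAddCommGroup E]
    [InnerProductSpace ℝ E] [ProperSpace E] {v : E → ℝ} {Ω : Set E} {y₀ p y : E} {a ρ δ : ℝ}
    (hρ : 0 ≤ ρ) (hcont : ContinuousOn v Ω) (hball : closedBall y₀ ρ ⊆ Ω)
    (hfar : ∀ x ∈ Ω, ρ < ‖x - y₀‖ →
      v y₀ + ⟪p, x - y₀⟫_ℝ ≤ v x + a / 2 * ‖x - y₀‖ ^ 2 - a * δ * ‖x - y₀‖)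
    (hy : y ∈ closedBall (p + a • y₀) (a * δ)) :
    ∃ x ∈ closedBall y₀ ρ, IsSubgradientOn (fun x => v x + a / 2 * ‖x‖ ^ 2) Ω x y := by
  have hcont' : ContinuousOn (fun x => v x + a / 2 * ‖x‖ ^ 2 - ⟪y, x⟫_ℝ) (closedBall y₀ ρ) :=
    ((hcont.mono hball).add (by fun_prop)).sub (by fun_prop)
  have hy₀ : y₀ ∈ closedBall y₀ ρ := mem_closedBall_self hρ
  obtain ⟨x, hx, hmin⟩ := (isCompact_closedBall y₀ ρ).exists_isMinOn ⟨y₀, hy₀⟩ hcont'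
  refine ⟨x, hx, fun x' hx' => ?_⟩
  suffices hle : v x + a / 2 * ‖x‖ ^ 2 - ⟪y, x⟫_ℝ ≤ v x' + a / 2 * ‖x'‖ ^ 2 - ⟪y, x'⟫_ℝ by
    rw [inner_sub_right]
    linarith
  by_cases hnear : x' ∈ closedBall y₀ ρ
  · exact hmin hnear
  refine (hmin hy₀).trans ?_
  have hfar' := hfar x' hx' (lt_of_not_ge fun h => hnear (mem_closedBall_iff_norm.2 h))
  have hslope : ⟪y - (p + a • y₀), x' - y₀⟫_ℝ ≤ a * δ * ‖x' - y₀‖ :=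
    (real_inner_le_norm _ _).trans
      (mul_le_mul_of_nonneg_right (mem_closedBall_iff_norm.1 hy) (norm_nonneg _))
  have hnorm : ‖x'‖ ^ 2 = ‖y₀‖ ^ 2 + 2 * ⟪y₀, x' - y₀⟫_ℝ + ‖x' - y₀‖ ^ 2 := by
    rw [← norm_add_sq_real, add_sub_cancel]
  have hsplit : ⟪y, x'⟫_ℝ = ⟪y, y₀⟫_ℝ + ⟪y, x' - y₀⟫_ℝ := by
    rw [← inner_add_right, add_sub_cancel]
  rw [inner_sub_left, inner_add_left, real_inner_smul_left] at hslope
  simp only [hnorm, hsplit]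
  linarith

section Paraboloid

variable {n : ℕ} {v : Euc n → ℝ} {Ω : Set (Euc n)}

lemma mem_Gm_iff {K : ℝ} {x : Euc n} :
    x ∈ Gm K v Ω ↔ x ∈ Ω ∧ ∃ y, IsSubgradientOn (fun x => v x + K / 2 * ‖x‖ ^ 2) Ω x y := by
  have hnorm (x' : Euc n) : ‖x'‖ ^ 2 = ‖x‖ ^ 2 + 2 * ⟪x, x' - x⟫_ℝ + ‖x' - x‖ ^ 2 := by
    rw [← norm_add_sq_real, add_sub_cancel]
  refine and_congr_right fun _ => ⟨fun ⟨p, hp⟩ => ⟨p + K • x, fun x' hx' => ?_⟩,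
    fun ⟨y, hy⟩ => ⟨y - K • x, fun x' hx' => ?_⟩⟩
  · have h := hp x' hx'
    simp only [hnorm x', inner_add_left, real_inner_smul_left]
    linarith
  · have h := hy x' hx'
    simp only [hnorm x'] at h
    rw [inner_sub_left, real_inner_smul_left]
    linarith

lemma norm_le_sqrt_mul {x : Euc n} {s : ℝ} (hs : 0 ≤ s) (hx : ∀ i, |x i| ≤ s) :
    ‖x‖ ≤ √n * s := by
  rw [EuclideanSpace.norm_eq, Real.sqrt_le_iff]
  refine ⟨by positivity, ?_⟩
  rw [mul_pow, Real.sq_sqrt (Nat.cast_nonneg n)]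
  calc ∑ i, ‖x i‖ ^ 2 ≤ ∑ _i : Fin n, s ^ 2 :=
        Finset.sum_le_sum fun i _ => pow_le_pow_left₀ (norm_nonneg _) (hx i) 2
    _ = n * s ^ 2 := by simp

lemma ofReal_pow_le_volume_closedBall [NeZero n] (c : Euc n) {ρ : ℝ} (hρ : 0 ≤ ρ) :
    ENNReal.ofReal ((2 * (ρ / √n)) ^ n) ≤ volume (closedBall c ρ) := by
  have hn : 0 < √n := Real.sqrt_pos.2 (Nat.cast_pos.2 (NeZero.pos n))
  have hs : 0 ≤ ρ / √n := by positivity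
  calc ENNReal.ofReal ((2 * (ρ / √n)) ^ n)
      = volume (closedBall (c : Fin n → ℝ) (ρ / √n)) := by
        rw [Real.volume_pi_closedBall _ hs, Fintype.card_fin]
    _ = volume ((WithLp.ofLp : Euc n → Fin n → ℝ) ⁻¹' closedBall (c : Fin n → ℝ) (ρ / √n)) :=
        ((PiLp.volume_preserving_ofLp (Fin n)).measure_preimage
          measurableSet_closedBall.nullMeasurableSet).symm
    _ ≤ volume (closedBall c ρ) := measure_mono fun y hy => by
        rw [mem_preimage, mem_closedBall, dist_pi_le_iff hs] at hy
        rw [mem_closedBall_iff_norm]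
        exact (norm_le_sqrt_mul hs hy).trans_eq (mul_div_cancel₀ ρ hn.ne')

lemma le_volume_Gm_inter_closedBall [NeZero n] {lam Lam : ℝ} (hlam : 0 < lam) (hLam : lam ≤ Lam)
    (hv : ContinuousOn v Ω) (hs : ViscSupersol lam Lam Ω v) {a ρ δ : ℝ} (ha : 0 < a) (hρ : 0 ≤ ρ)
    (hδ : 0 ≤ δ) {y₀ p : Euc n} (hball : closedBall y₀ ρ ⊆ Ω)
    (hfar : ∀ x ∈ Ω, ρ < ‖x - y₀‖ →
      v y₀ + ⟪p, x - y₀⟫_ℝ ≤ v x + a / 2 * ‖x - y₀‖ ^ 2 - a * δ * ‖x - y₀‖) :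
    ENNReal.ofReal ((lam / (lam + ((n : ℝ) - 1) * Lam)) ^ n * (2 * (δ / √n)) ^ n)
      ≤ volume (Gm a v Ω ∩ closedBall y₀ ρ) := by
  set D := lam + ((n : ℝ) - 1) * Lam
  have hn : (1 : ℝ) ≤ n := by exact_mod_cast NeZero.one_le
  have hD_pos : 0 < D :=
    add_pos_of_pos_of_nonneg hlam (mul_nonneg (sub_nonneg.2 hn) (hlam.le.trans hLam))
  have hcontact := (ofReal_pow_le_volume_closedBall (p + a • y₀) (mul_nonneg ha.le hδ)).trans
    (volume_le_mul_volume_contactSet (hs.subjetCurvatureLE_add_norm_sq hlam hLam ha.le)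
      (by positivity) (hv.add (by fun_prop)) (isCompact_closedBall y₀ ρ)
      (isCompact_closedBall _ _) hball
      fun y hy => exists_isSubgradientOn_of_mem_closedBall hρ hv hball hfar hy)
  rw [finrank_euclideanSpace_fin] at hcontact
  have hset : {x ∈ closedBall y₀ ρ |
      ∃ y, IsSubgradientOn (fun x => v x + a / 2 * ‖x‖ ^ 2) Ω x y} ⊆ Gm a v Ω ∩ closedBall y₀ ρ :=
    fun x hx => ⟨mem_Gm_iff.2 ⟨hball hx.1, hx.2⟩, hx.1⟩
  have hscale : (lam / D) ^ n * (2 * (δ / √n)) ^ n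
      = ((a * (D / lam)) ^ n)⁻¹ * (2 * (a * δ / √n)) ^ n := by
    rw [← mul_pow, ← inv_pow, ← mul_pow]
    congr 1
    field_simp
  have hfactor : 0 < (a * (D / lam)) ^ n := by positivity
  rw [hscale, ENNReal.ofReal_mul (inv_nonneg.2 hfactor.le), ENNReal.ofReal_inv_of_pos hfactor,
    ENNReal.inv_mul_le_iff (ENNReal.ofReal_pos.2 hfactor).ne' ENNReal.ofReal_ne_top]
  exact hcontact.trans (mul_le_mul_right (measure_mono hset) _)

end Paraboloid

/-! ### The barrier -/

section NormRpow

variable {E : Type*} [NormedAddCommGroup E] [InnerProductSpace ℝ E]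

lemma HasSubjet.of_isLocalMinOn_sub {v f : E → ℝ} {Ω : Set E} {x₀ p : E} {q : E → ℝ}
    (hf : HasSubjet f Ω x₀ p q) (hmin : IsLocalMinOn (fun x => v x - f x) Ω x₀) :
    HasSubjet v Ω x₀ p q := by
  intro ε hε
  filter_upwards [hf ε hε, hmin] with x hfx hmx
  linarith

lemma hasSubjet_of_hasFDerivAt {f : E → ℝ} {g : E → E} {g' : E →L[ℝ] E} {Ω : Set E} {x₀ : E}
    {q : E → ℝ} (hf : ∀ᶠ x in 𝓝 x₀, HasFDerivAt f (innerSL ℝ (g x)) x)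
    (hg : HasFDerivAt g g' x₀) (hq : ∀ h, q h = ⟪g' h, h⟫_ℝ) : HasSubjet f Ω x₀ (g x₀) q := by
  intro ε hε
  have htaylor := taylor_two_isLittleO hf ((innerSL ℝ (E := E)).hasFDerivAt.comp x₀ hg)
  filter_upwards [(htaylor.def hε).filter_mono nhdsWithin_le_nhds] with x hx
  have hlow := neg_le_of_abs_le (hx.trans_eq (by rw [norm_pow, norm_norm]))
  change _ ≤ f x - f x₀ - ⟪g x₀, x - x₀⟫_ℝ - 1 / 2 * ⟪g' (x - x₀), x - x₀⟫_ℝ at hlow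
  linarith [hq (x - x₀)]

lemma hasFDerivAt_norm_rpow_of_ne_zero {x : E} (hx : x ≠ 0) (β : ℝ) :
    HasFDerivAt (fun x : E => ‖x‖ ^ β) (innerSL ℝ ((β * ‖x‖ ^ (β - 2)) • x)) x := by
  have hpow (y : E) (γ : ℝ) : (‖y‖ ^ 2) ^ (γ / 2) = ‖y‖ ^ γ := by
    rw [← Real.rpow_natCast_mul (norm_nonneg y)]
    congr 1
    push_cast
    ring
  have hder := (hasStrictFDerivAt_norm_sq x).hasFDerivAt.rpow_const (p := β / 2)
    (.inl (pow_ne_zero 2 (norm_ne_zero_iff.2 hx)))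
  simp only [hpow] at hder
  refine hder.congr_fderiv ?_
  rw [show β / 2 - 1 = (β - 2) / 2 by ring, hpow]
  ext h
  simp only [smul_apply, coe_innerSL_apply, nsmul_eq_mul, Nat.cast_ofNat, smul_eq_mul, map_smul]
  ring

lemma hasFDerivAt_norm_rpow_smul_self {x : E} (hx : x ≠ 0) (γ : ℝ) :
    HasFDerivAt (fun x : E => ‖x‖ ^ γ • x)
      (‖x‖ ^ γ • ContinuousLinearMap.id ℝ E +
        (innerSL ℝ ((γ * ‖x‖ ^ (γ - 2)) • x)).smulRight x) x :=
  (hasFDerivAt_norm_rpow_of_ne_zero hx γ).smul (hasFDerivAt_id x)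

lemma hasSubjet_add_norm_rpow {p x₀ x₁ c : E} {Ω : Set E} {α A K : ℝ} (hne : x₀ ≠ c) :
    ∃ y, HasSubjet
      (fun x => ⟪p, x - x₁⟫_ℝ - K / 2 * ‖x - x₁‖ ^ 2 + A * ‖x - c‖ ^ (-α)) Ω x₀ y
      fun h => (α + 2) * (A * α * ‖x₀ - c‖ ^ (-α - 2)) * ⟪‖x₀ - c‖⁻¹ • (x₀ - c), h⟫_ℝ ^ 2
        - (A * α * ‖x₀ - c‖ ^ (-α - 2) + K) * ‖h‖ ^ 2 := by
  have hsub (a x : E) : HasFDerivAt (fun x => x - a) (ContinuousLinearMap.id ℝ E) x :=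
    (hasFDerivAt_id x).sub_const a
  have hf : ∀ᶠ x in 𝓝 x₀, HasFDerivAt
      (fun x => ⟪p, x - x₁⟫_ℝ - K / 2 * ‖x - x₁‖ ^ 2 + A * ‖x - c‖ ^ (-α))
      (innerSL ℝ (p - K • (x - x₁) - (A * α) • ‖x - c‖ ^ (-α - 2) • (x - c))) x := by
    filter_upwards [isOpen_ne.mem_nhds hne] with x hx
    have hinner : HasFDerivAt (fun x => ⟪p, x - x₁⟫_ℝ) (innerSL ℝ p) x :=
      (innerSL ℝ p).hasFDerivAt.comp x (hsub x₁ x)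
    have hpow : HasFDerivAt (fun x => ‖x - c‖ ^ (-α)) _ x :=
      HasFDerivAt.comp (g := fun z : E => ‖z‖ ^ (-α)) x
        (hasFDerivAt_norm_rpow_of_ne_zero (sub_ne_zero.2 hx) (-α)) (hsub c x)
    refine ((hinner.sub ((hsub x₁ x).norm_sq.const_mul (K / 2))).add
      (hpow.const_mul A)).congr_fderiv ?_
    ext h
    simp only [map_sub, map_smul, ContinuousLinearMap.comp_id, add_apply, sub_apply,
      coe_innerSL_apply, smul_apply, nsmul_eq_mul, Nat.cast_ofNat, smul_eq_mul]
    ring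
  have hg : HasFDerivAt (fun x => p - K • (x - x₁) - (A * α) • ‖x - c‖ ^ (-α - 2) • (x - c)) _ x₀ :=
    (((hsub x₁ x₀).const_smul K).const_sub p).sub
      (((hasFDerivAt_norm_rpow_smul_self (sub_ne_zero.2 hne) (-α - 2)).comp x₀
        (hsub c x₀)).const_smul (A * α))
  refine ⟨_, hasSubjet_of_hasFDerivAt hf hg fun h => ?_⟩
  have hpow : ‖x₀ - c‖ ^ (-α - 2) = ‖x₀ - c‖ ^ (-α - 2 - 2) * ‖x₀ - c‖ ^ 2 := by
    rw [← Real.rpow_add_natCast (norm_ne_zero_iff.2 (sub_ne_zero.2 hne))]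
    norm_num
  have hnorm : ‖x₀ - c‖ ≠ 0 := norm_ne_zero_iff.2 (sub_ne_zero.2 hne)
  rw [hpow]
  simp only [real_inner_smul_left, inner_sub_left, map_smul, map_sub,
    ContinuousLinearMap.comp_id, smul_add, sub_apply, neg_apply, smul_apply,
    ContinuousLinearMap.id_apply, add_apply, ContinuousLinearMap.smulRight_apply,
    coe_innerSL_apply, smul_eq_mul, inner_neg_left, inner_self_eq_norm_sq_to_K,
    Real.ringHom_apply, inner_add_left]
  field_simp
  ring

end NormRpow

lemma ViscSupersol.mul_norm_rpow_le {n : ℕ} {lam Lam : ℝ} {Ω : Set (Euc n)} {v : Euc n → ℝ}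
    (hs : ViscSupersol lam Lam Ω v) (hlam : 0 < lam) (hLam : lam ≤ Lam) {α A K : ℝ}
    (hα : 0 ≤ α) (hα' : ((n : ℝ) - 1) * Lam ≤ lam * α) (hA : 0 ≤ A) (hK : 0 ≤ K)
    {p x₀ x₁ c : Euc n} (hx₀ : x₀ ∈ Ω) (hne : x₀ ≠ c)
    (hmin : IsLocalMinOn (fun x => v x -
      (⟪p, x - x₁⟫_ℝ - K / 2 * ‖x - x₁‖ ^ 2 + A * ‖x - c‖ ^ (-α))) Ω x₀) :
    A * α * ‖x₀ - c‖ ^ (-α - 2) ≤ (α + 1) * K := by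
  obtain ⟨y, hy⟩ := hasSubjet_add_norm_rpow (p := p) (x₁ := x₁) (Ω := Ω) (α := α) (A := A)
    (K := K) hne
  set G := A * α * ‖x₀ - c‖ ^ (-α - 2)
  have hG : 0 ≤ G := by positivity
  have hunit : ‖‖x₀ - c‖⁻¹ • (x₀ - c)‖ = 1 := norm_smul_inv_norm (𝕜 := ℝ) (sub_ne_zero.2 hne)
  have hpucci := hs.le_of_hasSubjet hlam.le hLam hx₀ hunit (add_nonneg hG hK)
    (hy.of_isLocalMinOn_sub hmin)
  have hdim := mul_le_mul_of_nonneg_right hα' (add_nonneg hG hK)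
  have hle : lam * ((α + 2) * G - (G + K)) ≤ lam * (α * (G + K)) := by linarith
  linarith [le_of_mul_le_mul_left hle hlam]

lemma exists_dist_eq_and_le_of_forall_not_isLocalMin {E : Type*} [PseudoMetricSpace E]
    [ProperSpace E] {w : E → ℝ} {c x₁ : E} {ρ R : ℝ}
    (hw : ContinuousOn w (closedBall c R \ ball c ρ)) (hx₁ : x₁ ∈ closedBall c R \ ball c ρ)
    (houter : ∀ x, dist x c = R → w x₁ < w x)
    (hinner : ∀ x, ρ < dist x c → dist x c < R → ¬ IsLocalMin w x) :
    ∃ y, dist y c = ρ ∧ w y ≤ w x₁ := by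
  obtain ⟨y, hy, hmin⟩ := ((isCompact_closedBall c R).diff isOpen_ball).exists_isMinOn ⟨x₁, hx₁⟩ hw
  have hyR : dist y c < R :=
    lt_of_le_of_ne hy.1 fun h => (houter y h).not_ge (hmin hx₁)
  refine ⟨y, le_antisymm (not_lt.1 fun hρ => hinner y hρ hyR ?_) (not_lt.1 hy.2), hmin hx₁⟩
  have hdist : Tendsto (fun x => dist x c) (𝓝 y) (𝓝 (dist y c)) :=
    (continuous_id.dist continuous_const).tendsto y
  filter_upwards [hdist.eventually_const_lt hρ, hdist.eventually_lt_const hyR] with x hxρ hxR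
  exact hmin ⟨hxR.le, not_lt.2 hxρ.le⟩

lemma ViscSupersol.not_isLocalMin_sub_barrier {n : ℕ} {lam Lam : ℝ} {Ω : Set (Euc n)}
    {v : Euc n → ℝ} (hs : ViscSupersol lam Lam Ω v) (hlam : 0 < lam) (hLam : lam ≤ Lam)
    {α R K : ℝ} (hα : 1 ≤ α) (hα' : ((n : ℝ) - 1) * Lam ≤ lam * α) (hK : 0 < K)
    {c x₁ x₀ p : Euc n} (hx₀ : x₀ ∈ Ω) (hne : x₀ ≠ c) (hx₀R : dist x₀ c ≤ R) :
    ¬ IsLocalMin (fun x => v x -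
      (⟪p, x - x₁⟫_ℝ - K / 2 * ‖x - x₁‖ ^ 2 + 3 * K * R ^ (α + 2) * ‖x - c‖ ^ (-α))) x₀ := by
  intro hmin
  have hx₀_pos : 0 < ‖x₀ - c‖ := norm_pos_iff.2 (sub_ne_zero.2 hne)
  have hR : 0 < R := (dist_pos.2 hne).trans_le hx₀R
  have hcontact := hs.mul_norm_rpow_le hlam hLam (by linarith) hα' (by positivity) hK.le hx₀ hne
    (hmin.on Ω)
  have hle : R ^ (-α - 2) ≤ ‖x₀ - c‖ ^ (-α - 2) :=
    Real.rpow_le_rpow_of_nonpos hx₀_pos (dist_eq_norm x₀ c ▸ hx₀R) (by linarith)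
  have hrpow : R ^ (α + 2) * R ^ (-α - 2) = 1 := by
    rw [← Real.rpow_add hR, show α + 2 + (-α - 2) = 0 by ring, Real.rpow_zero]
  have hcontra : 3 * K * α ≤ (α + 1) * K := by
    calc 3 * K * α = 3 * K * R ^ (α + 2) * α * R ^ (-α - 2) := by
          linear_combination -(3 * K * α) * hrpow
      _ ≤ 3 * K * R ^ (α + 2) * α * ‖x₀ - c‖ ^ (-α - 2) := by gcongr
      _ ≤ (α + 1) * K := hcontact
  nlinarith [mul_le_mul_of_nonneg_left hα hK.le]

lemma ViscSupersol.exists_dist_le_and_sub_le {n : ℕ} {lam Lam : ℝ} {Ω : Set (Euc n)}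
    {v : Euc n → ℝ} (hs : ViscSupersol lam Lam Ω v) (hv : ContinuousOn v Ω) (hlam : 0 < lam)
    (hLam : lam ≤ Lam) {α R ρ K : ℝ} (hα : 1 ≤ α) (hα' : ((n : ℝ) - 1) * Lam ≤ lam * α)
    (hρ : 0 < ρ) (hK : 0 < K) {c x₁ p : Euc n}
    (hball : closedBall c R ⊆ Ω) (hx₁ : x₁ ∈ ball c R)
    (hp : ∀ x ∈ Ω, v x₁ + ⟪p, x - x₁⟫_ℝ - K / 2 * ‖x - x₁‖ ^ 2 ≤ v x) :
    ∃ y, dist y c ≤ ρ ∧ v y - v x₁ - ⟪p, y - x₁⟫_ℝ ≤ 3 * K * R ^ 2 * (R / ρ) ^ α := by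
  have hR : 0 < R := dist_nonneg.trans_lt hx₁
  by_cases hnear : dist x₁ c ≤ ρ
  · exact ⟨x₁, hnear, by simp only [sub_self, inner_zero_right]; positivity⟩
  have hA : 0 < 3 * K * R ^ (α + 2) := by positivity
  set A := 3 * K * R ^ (α + 2) with hAdef
  set w : Euc n → ℝ := fun x =>
    v x - (⟪p, x - x₁⟫_ℝ - K / 2 * ‖x - x₁‖ ^ 2 + A * ‖x - c‖ ^ (-α)) with hw
  have hsub : closedBall c R \ ball c ρ ⊆ Ω := sdiff_subset.trans hball
  have hwc : ContinuousOn w (closedBall c R \ ball c ρ) := by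
    refine (hv.mono hsub).sub (ContinuousOn.add (by fun_prop) (continuousOn_const.mul
      (ContinuousOn.rpow_const (by fun_prop) fun x hx => .inl ?_)))
    exact (hρ.trans_le (dist_eq_norm x c ▸ not_lt.1 hx.2)).ne'
  have hx₁_pos : 0 < ‖x₁ - c‖ := dist_eq_norm x₁ c ▸ hρ.trans (not_le.1 hnear)
  have hwx₁ : w x₁ = v x₁ - A * ‖x₁ - c‖ ^ (-α) := by simp [hw]
  have houter (x : Euc n) (hx : dist x c = R) : w x₁ < w x := by
    have hpx := hp x (hball hx.le)
    have hlt : R ^ (-α) < ‖x₁ - c‖ ^ (-α) :=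
      Real.rpow_lt_rpow_of_neg hx₁_pos (dist_eq_norm x₁ c ▸ hx₁) (by linarith)
    rw [hwx₁, hw]
    dsimp only
    rw [← dist_eq_norm x c, hx]
    nlinarith [mul_lt_mul_of_pos_left hlt hA]
  have hinner (x : Euc n) (hx : ρ < dist x c) (hxR : dist x c < R) : ¬ IsLocalMin w x :=
    hs.not_isLocalMin_sub_barrier hlam hLam hα hα' hK (hball hxR.le)
      (dist_pos.1 (hρ.trans hx)) hxR.le
  obtain ⟨y, hy, hwy⟩ := exists_dist_eq_and_le_of_forall_not_isLocalMin hwc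
    ⟨(mem_ball.1 hx₁).le, fun h => hnear h.le⟩ houter hinner
  have hAρ : A * ρ ^ (-α) = 3 * K * R ^ 2 * (R / ρ) ^ α := by
    rw [hAdef, Real.rpow_add hR, Real.rpow_neg hρ.le, Real.div_rpow hR.le hρ.le, Real.rpow_two]
    ring
  rw [hwx₁, hw] at hwy
  dsimp only at hwy
  rw [← dist_eq_norm y c, hy, hAρ] at hwy
  have hpow : 0 ≤ A * ‖x₁ - c‖ ^ (-α) := by positivity
  have hsq : 0 ≤ K / 2 * ‖y - x₁‖ ^ 2 := by positivity
  exact ⟨y, hy.le, by linarith⟩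

/-! ### Density of the good set in cubes -/

/-- The constant `M` of the paper: at openings `M * K` the good set already fills a fixed fraction
of every cube close to a point that is good at opening `K`. -/
def criticalOpening (n : ℕ) (lam Lam : ℝ) : ℝ :=
  884736 * (n : ℝ) ^ 3 * (36 * (n : ℝ)) ^ (max (1 : ℝ) (((n : ℝ) - 1) * Lam / lam - 1))

/-- The constant `1 - σ` of the paper: the fraction of a cube filled by contact points. -/
def contactFraction (n : ℕ) (lam Lam : ℝ) : ℝ :=
  (lam / (lam + ((n : ℝ) - 1) * Lam)) ^ n * (1 / (4 * √n)) ^ n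

section Density

variable {n : ℕ} {lam Lam : ℝ} {Ω : Set (Euc n)} {v : Euc n → ℝ}

lemma le_criticalOpening [NeZero n] : 884736 ≤ criticalOpening n lam Lam := by
  have hn : (1 : ℝ) ≤ n := by exact_mod_cast NeZero.one_le
  have hrpow : 1 ≤ (36 * (n : ℝ)) ^ max (1 : ℝ) (((n : ℝ) - 1) * Lam / lam - 1) :=
    Real.one_le_rpow (by linarith) (zero_le_one.trans (le_max_left _ _))
  calc (884736 : ℝ) = 884736 * 1 ^ 3 * 1 := by norm_num
    _ ≤ criticalOpening n lam Lam := by unfold criticalOpening; gcongr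

lemma closedBall_subset_cube {c : Euc n} {ρ r : ℝ} (h : ρ < r / 2) : closedBall c ρ ⊆ cube r c :=
  fun x hx i => ((PiLp.norm_apply_le (x - c) i).trans (mem_closedBall_iff_norm.1 hx)).trans_lt h

lemma le_volume_Gm_inter_closedBall_of_lt [NeZero n] (hlam : 0 < lam) (hLam : lam ≤ Lam)
    (hv : ContinuousOn v Ω) (hs : ViscSupersol lam Lam Ω v) {a r : ℝ} (ha : 0 < a) (hr : 0 ≤ r)
    {y₀ p : Euc n} (hball : closedBall y₀ (3 * r / 8) ⊆ Ω)
    (hfar : ∀ x ∈ Ω, 3 * r / 8 < ‖x - y₀‖ →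
      v y₀ + ⟪p, x - y₀⟫_ℝ ≤ v x + a / 6 * ‖x - y₀‖ ^ 2) :
    ENNReal.ofReal (contactFraction n lam Lam * r ^ n)
      ≤ volume (Gm a v Ω ∩ closedBall y₀ (3 * r / 8)) := by
  have hscale : contactFraction n lam Lam * r ^ n
      = (lam / (lam + ((n : ℝ) - 1) * Lam)) ^ n * (2 * (r / 8 / √n)) ^ n := by
    rw [contactFraction, mul_assoc, ← mul_pow]
    congr 2
    ring
  rw [hscale]
  refine le_volume_Gm_inter_closedBall hlam hLam hv hs ha (by positivity) (by positivity) hball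
    fun x hx hxd => (hfar x hx hxd).trans ?_
  have hle : 0 ≤ a * ‖x - y₀‖ * (‖x - y₀‖ - 3 * r / 8) := by
    have := sub_nonneg.2 hxd.le
    positivity
  linarith

lemma le_volume_Gm_criticalOpening_inter_cube_one [NeZero n] (hlam : 0 < lam) (hLam : lam ≤ Lam)
    (hv : ContinuousOn v Ω) (hs : ViscSupersol lam Lam Ω v) {y₀ : Euc n}
    (hball : closedBall y₀ (3 / 8) ⊆ Ω) (hosc : ∀ x ∈ Ω, v y₀ ≤ v x + 1 / 2) :
    ENNReal.ofReal (contactFraction n lam Lam)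
      ≤ volume (Gm (criticalOpening n lam Lam) v Ω ∩ cube 1 y₀) := by
  have hM : 884736 ≤ criticalOpening n lam Lam := le_criticalOpening
  have h := le_volume_Gm_inter_closedBall_of_lt hlam hLam hv hs (r := 1) (y₀ := y₀) (p := 0)
    (by linarith) zero_le_one (by simpa using hball) fun x hx hxd => by
      rw [inner_zero_left, add_zero]
      nlinarith [hosc x hx, mul_le_mul hM (pow_le_pow_left₀ (by norm_num) hxd.le 2)
        (by norm_num) (by linarith)]
  rw [one_pow, mul_one] at h
  exact h.trans (measure_mono (inter_subset_inter_right _ (closedBall_subset_cube (by norm_num))))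

lemma barrier_value_eq [NeZero n] {K r : ℝ} (hr : 0 < r) (α : ℝ) :
    3 * K * (3 * √n * r) ^ 2 * (3 * √n * r / (r / (12 * √n))) ^ (α + 1)
      = 972 * (n : ℝ) ^ 2 * (36 * (n : ℝ)) ^ α * K * r ^ 2 := by
  have hn : (0 : ℝ) < n := Nat.cast_pos.2 (NeZero.pos n)
  have hsq : √(n : ℝ) ^ 2 = n := Real.sq_sqrt hn.le
  have hratio : 3 * √n * r / (r / (12 * √n)) = 36 * n := by
    field_simp
    rw [hsq]
    ring
  rw [hratio, Real.rpow_add_one (by positivity), mul_pow, mul_pow, hsq]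
  ring

lemma barrier_add_paraboloid_le [NeZero n] {K r d ℓ : ℝ} (hK : 0 ≤ K) (hr : 0 ≤ r)
    (hrd : 3 * r / 8 ≤ d) (hℓ : 0 ≤ ℓ) (hℓd : ℓ ≤ 7 * √n * d) :
    972 * (n : ℝ) ^ 2 * (36 * (n : ℝ)) ^ max (1 : ℝ) (((n : ℝ) - 1) * Lam / lam - 1) * K * r ^ 2
      + K / 2 * ℓ ^ 2 ≤ criticalOpening n lam Lam * K / 6 * d ^ 2 := by
  have hn : (1 : ℝ) ≤ n := by exact_mod_cast NeZero.one_le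
  rw [criticalOpening]
  set P := (36 * (n : ℝ)) ^ max (1 : ℝ) (((n : ℝ) - 1) * Lam / lam - 1)
  have hP : 1 ≤ P := Real.one_le_rpow (by linarith) (zero_le_one.trans (le_max_left _ _))
  have hr_sq : r ^ 2 ≤ (8 / 3 * d) ^ 2 := pow_le_pow_left₀ hr (by linarith) 2
  have hℓ_sq : ℓ ^ 2 ≤ 49 * n * d ^ 2 := by
    calc ℓ ^ 2 ≤ (7 * √n * d) ^ 2 := pow_le_pow_left₀ hℓ hℓd 2
      _ = 49 * n * d ^ 2 := by
        rw [mul_pow, mul_pow, Real.sq_sqrt (Nat.cast_nonneg n)]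
        norm_num
  have hquad : (n : ℝ) ^ 2 * P ≤ n ^ 3 * P := by gcongr; norm_num
  have hlin : (n : ℝ) ≤ n ^ 3 * P := by
    calc (n : ℝ) = n ^ 1 * 1 := by ring
      _ ≤ n ^ 3 * P := by gcongr; norm_num
  calc 972 * (n : ℝ) ^ 2 * P * K * r ^ 2 + K / 2 * ℓ ^ 2
      ≤ 972 * (n : ℝ) ^ 2 * P * K * (8 / 3 * d) ^ 2 + K / 2 * (49 * n * d ^ 2) := by gcongr
    _ = (6912 * (n ^ 2 * P) + 49 / 2 * n) * (K * d ^ 2) := by ring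
    _ ≤ (147456 * (n ^ 3 * P)) * (K * d ^ 2) := by gcongr; linarith
    _ = 884736 * n ^ 3 * P * K / 6 * d ^ 2 := by ring

lemma le_volume_Gm_mul_inter_cube [NeZero n] (hlam : 0 < lam) (hLam : lam ≤ Lam)
    (hv : ContinuousOn v Ω) (hs : ViscSupersol lam Lam Ω v) {c x₁ : Euc n} {r K : ℝ}
    (hr : 0 < r) (hK : 0 < K) (hball : closedBall c (3 * √n * r) ⊆ Ω) (hx₁ : x₁ ∈ Gm K v Ω)
    (hx₁c : ∀ i, |x₁ i - c i| ≤ 2 * r) :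
    ENNReal.ofReal (contactFraction n lam Lam * r ^ n)
      ≤ volume (Gm (criticalOpening n lam Lam * K) v Ω ∩ cube r c) := by
  have hM : 884736 ≤ criticalOpening n lam Lam := le_criticalOpening
  have hq : 1 ≤ √(n : ℝ) := Real.one_le_sqrt.2 (by exact_mod_cast NeZero.one_le)
  have hqr : r ≤ √n * r := le_mul_of_one_le_left hr.le hq
  have hdist : ‖x₁ - c‖ ≤ √n * (2 * r) := norm_le_sqrt_mul (by positivity) hx₁c
  have hα : ((n : ℝ) - 1) * Lam ≤ lam * (max 1 (((n : ℝ) - 1) * Lam / lam - 1) + 1) := by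
    rw [← div_le_iff₀' hlam, ← sub_le_iff_le_add]
    exact le_max_right _ _
  obtain ⟨-, p, hp⟩ := hx₁
  obtain ⟨y₀, hy₀c, hy₀⟩ := hs.exists_dist_le_and_sub_le hv hlam hLam
    (by linarith [le_max_left 1 (((n : ℝ) - 1) * Lam / lam - 1)]) hα (ρ := r / (12 * √n))
    (by positivity) hK hball (mem_ball_iff_norm.2 (by linarith)) hp
  rw [barrier_value_eq hr] at hy₀
  have hρ : r / (12 * √n) ≤ r / 12 := by gcongr; linarith
  have hy₀x₁ : ‖y₀ - x₁‖ ≤ 25 / 12 * (√n * r) := by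
    have h := norm_sub_le_norm_sub_add_norm_sub y₀ c x₁
    rw [norm_sub_rev c x₁, ← dist_eq_norm y₀ c] at h
    linarith
  have hsub : closedBall y₀ (3 * r / 8) ⊆ closedBall c (11 * r / 24) :=
    closedBall_subset_closedBall' (by linarith)
  refine (le_volume_Gm_inter_closedBall_of_lt hlam hLam hv hs (p := p) (by positivity) hr.le
    (hsub.trans ((closedBall_subset_closedBall (by linarith)).trans hball))
    fun x hx hxd => ?_).trans (measure_mono (inter_subset_inter_right _
      (hsub.trans (closedBall_subset_cube (by linarith)))))
  have hxx₁ : ‖x - x₁‖ ≤ 7 * √n * ‖x - y₀‖ := by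
    have h := norm_sub_le_norm_sub_add_norm_sub x y₀ x₁
    nlinarith [norm_nonneg (x - y₀)]
  have hinner : ⟪p, x - x₁⟫_ℝ = ⟪p, x - y₀⟫_ℝ + ⟪p, y₀ - x₁⟫_ℝ := by
    rw [← inner_add_right, sub_add_sub_cancel]
  linarith [hp x hx, barrier_add_paraboloid_le (lam := lam) (Lam := Lam) hK.le hr.le hxd.le
    (norm_nonneg _) hxx₁]

end Density

/-! ### The bad set is open -/

section Open

variable {E : Type*} [NormedAddCommGroup E] [InnerProductSpace ℝ E] {ψ : E → ℝ} {Ω : Set E}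

lemma IsSubgradientOn.mul_norm_le {x y : E} {δ b : ℝ} (hy : IsSubgradientOn ψ Ω x y) (hδ : 0 ≤ δ)
    (hball : closedBall x δ ⊆ Ω) (hb : ∀ x' ∈ closedBall x δ, ψ x' - ψ x ≤ b) : δ * ‖y‖ ≤ b := by
  obtain rfl | hy₀ := eq_or_ne y 0
  · simpa using hb x (mem_closedBall_self hδ)
  have hnorm : ‖y‖ ≠ 0 := norm_ne_zero_iff.2 hy₀
  set x' := x + (δ / ‖y‖) • y
  have hx' : x' ∈ closedBall x δ := by
    rw [mem_closedBall_iff_norm, add_sub_cancel_left, norm_smul,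
      Real.norm_of_nonneg (by positivity), div_mul_cancel₀ δ hnorm]
  have hinner : ⟪y, x' - x⟫_ℝ = δ * ‖y‖ := by
    rw [add_sub_cancel_left, real_inner_smul_right, real_inner_self_eq_norm_sq]
    field_simp
  linarith [hy x' (hball hx'), hb x' hx']

/-- Near a given point the subgradients stay in a ball, so the contact pairs form a compact set,
whose projection is closed. -/
lemma isOpen_setOf_forall_not_isSubgradientOn [ProperSpace E] (hΩ : IsOpen Ω)
    (hψ : ContinuousOn ψ Ω) : IsOpen {x ∈ Ω | ∀ y, ¬ IsSubgradientOn ψ Ω x y} := by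
  rw [isOpen_iff_mem_nhds]
  rintro x ⟨hx, hx_bad⟩
  obtain ⟨δ, hδ, hδΩ⟩ := nhds_basis_closedBall.mem_iff.1 (hΩ.mem_nhds hx)
  obtain ⟨b, hb⟩ := (isCompact_closedBall x δ).exists_bound_of_continuousOn (hψ.mono hδΩ)
  have hδ2 : 0 < δ / 2 := half_pos hδ
  have hhalf : closedBall x (δ / 2) ⊆ Ω := (closedBall_subset_closedBall (by linarith)).trans hδΩ
  set P := contactPairs ψ Ω (closedBall x (δ / 2)) (closedBall 0 (2 * b / (δ / 2)))
  have hclosed : IsClosed (Prod.fst '' P) :=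
    ((isCompact_contactPairs hψ (isCompact_closedBall _ _) (isCompact_closedBall _ _)
      hhalf).image continuous_fst).isClosed
  have hxP : x ∉ Prod.fst '' P := by
    rintro ⟨q, hq, rfl⟩
    exact hx_bad q.2 hq.2
  filter_upwards [hclosed.isOpen_compl.mem_nhds hxP, closedBall_mem_nhds x hδ2] with z hzP hz
  refine ⟨hhalf hz, fun y hy => hzP ⟨(z, y), ⟨⟨hz, ?_⟩, hy⟩, rfl⟩⟩
  have hzδ : closedBall z (δ / 2) ⊆ closedBall x δ :=
    closedBall_subset_closedBall' (by linarith [mem_closedBall.1 hz])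
  have hosc : ∀ x' ∈ closedBall z (δ / 2), ψ x' - ψ z ≤ 2 * b := fun x' hx' => by
    linarith [(abs_le.1 (hb x' (hzδ hx'))).2,
      (abs_le.1 (hb z (hzδ (mem_closedBall_self hδ2.le)))).1]
  rw [mem_closedBall_zero_iff, le_div_iff₀' hδ2]
  exact hy.mul_norm_le hδ2.le (hzδ.trans hδΩ) hosc

variable {n : ℕ} {v : Euc n → ℝ} {Ω : Set (Euc n)} {K L : ℝ}

lemma isOpen_Am (hΩ : IsOpen Ω) (hv : ContinuousOn v Ω) : IsOpen (Am K v Ω) := by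
  have hcont : ContinuousOn (fun x => v x + K / 2 * ‖x‖ ^ 2) Ω := hv.add (by fun_prop)
  suffices hAm : Am K v Ω =
      {x ∈ Ω | ∀ y, ¬ IsSubgradientOn (fun x => v x + K / 2 * ‖x‖ ^ 2) Ω x y} by
    exact hAm ▸ isOpen_setOf_forall_not_isSubgradientOn hΩ hcont
  ext x
  rw [Am, Set.mem_sdiff, mem_Gm_iff, mem_ofPred_eq, not_and, not_exists]
  exact and_congr_right fun hx => ⟨fun h => h hx, fun h _ => h⟩

lemma Am_subset_Am (h : K ≤ L) : Am L v Ω ⊆ Am K v Ω := by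
  refine sdiff_subset_sdiff_right fun x hx => ⟨hx.1, ?_⟩
  obtain ⟨-, p, hp⟩ := hx
  refine ⟨p, fun x' hx' => (hp x' hx').trans' ?_⟩
  gcongr

end Open

/-! ### The Calderón-Zygmund decomposition -/

section CalderonZygmund

variable {α ι : Type*} {key : ℕ → α → ι}

lemma key_eq_of_le (hnest : ∀ j x y, key (j + 1) x = key (j + 1) y → key j x = key j y)
    {i j : ℕ} (hij : i ≤ j) {x y : α} (h : key j x = key j y) : key i x = key i y := by
  induction j, hij using Nat.le_induction with
  | base => exact h
  | succ j _ ih => exact ih (hnest j x y h)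

lemma preimage_image_eq_of_forall {f : α → ι} {U : Set α} (hU : ∀ x ∈ U, ∀ y, f x = f y → y ∈ U) :
    f ⁻¹' (f '' U) = U :=
  (subset_preimage_image f U).antisymm' fun y ⟨x, hx, hxy⟩ => hU x hx y hxy

lemma mem_disjointed_of_key_eq
    (hnest : ∀ j x y, key (j + 1) x = key (j + 1) y → key j x = key j y) {S : ℕ → Set α}
    (hS : ∀ j, ∀ x ∈ S j, ∀ y, key j x = key j y → y ∈ S j) {j : ℕ} {x y : α}
    (hx : x ∈ disjointed S j) (hxy : key j x = key j y) : y ∈ disjointed S j := by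
  rw [disjointed_eq_inter_compl] at hx ⊢
  refine ⟨hS j x hx.1 y hxy, mem_iInter₂.2 fun i hi hy => mem_iInter₂.1 hx.2 i hi ?_⟩
  exact hS i y hy x (key_eq_of_le hnest hi.le hxy).symm

variable [MeasurableSpace α] {μ : Measure α} {A B : Set α} {s : ℝ≥0∞}

lemma measure_inter_preimage_le_mul [MeasurableSpace ι] [Countable ι] [MeasurableSingletonClass ι]
    {f : α → ι} (hf : Measurable f) {T : Set ι}
    (hT : ∀ k ∈ T, μ (A ∩ f ⁻¹' {k}) ≤ s * μ (f ⁻¹' {k})) :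
    μ (A ∩ f ⁻¹' T) ≤ s * μ (f ⁻¹' T) := by
  calc μ (A ∩ f ⁻¹' T) = μ (⋃ k : T, A ∩ f ⁻¹' {k.1}) := by
        rw [← inter_iUnion, ← preimage_iUnion, iUnion_coe_set, biUnion_of_singleton]
    _ ≤ ∑' k : T, μ (A ∩ f ⁻¹' {k.1}) := measure_iUnion_le _
    _ ≤ ∑' k : T, s * μ (f ⁻¹' {k.1}) := ENNReal.tsum_le_tsum fun k => hT k k.2
    _ = s * μ (f ⁻¹' T) := by
        rw [ENNReal.tsum_mul_left,
          tsum_measure_preimage_singleton T.to_countable fun k _ => hf (measurableSet_singleton k)]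

/-- The points whose cell of generation `j` has a child of which `A` occupies more than the
fraction `s`. The cells of generation `j` are encoded as the fibres of `key j`. -/
def denseParents (μ : Measure α) (key : ℕ → α → ι) (A : Set α) (s : ℝ≥0∞) (j : ℕ) : Set α :=
  {x | ∃ y, key j y = key j x ∧
    s * μ (key (j + 1) ⁻¹' {key (j + 1) y}) < μ (A ∩ key (j + 1) ⁻¹' {key (j + 1) y})}

/-- Among the cells having a child too full of `A`, keep the maximal ones. They cover `A` and lie in
`B`, and by maximality `A` occupies at most the fraction `s` of each of them. -/
lemma measure_inter_le_mul_of_denseParents_subset [MeasurableSpace ι] [Countable ι]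
    [MeasurableSingletonClass ι] (hkey : ∀ j, Measurable (key j))
    (hnest : ∀ j x y, key (j + 1) x = key (j + 1) y → key j x = key j y) {k₀ : ι}
    (hroot : μ (A ∩ key 0 ⁻¹' {k₀}) ≤ s * μ (key 0 ⁻¹' {k₀}))
    (hcover : A ∩ key 0 ⁻¹' {k₀} ⊆ ⋃ j, denseParents μ key A s j)
    (hsub : ∀ j, key 0 ⁻¹' {k₀} ∩ denseParents μ key A s j ⊆ B) :
    μ (A ∩ key 0 ⁻¹' {k₀}) ≤ s * μ (B ∩ key 0 ⁻¹' {k₀}) := by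
  set Q := key 0 ⁻¹' {k₀}
  set S : ℕ → Set α := fun j => Q ∩ denseParents μ key A s j
  have hS : ∀ j, ∀ x ∈ S j, ∀ y, key j x = key j y → y ∈ S j := by
    rintro j x ⟨hxQ, z, hz, hdense⟩ y hxy
    exact ⟨(key_eq_of_le hnest j.zero_le hxy).symm.trans hxQ, z, hz.trans hxy, hdense⟩
  have hU (j : ℕ) : key j ⁻¹' (key j '' disjointed S j) = disjointed S j :=
    preimage_image_eq_of_forall fun x hx y hxy => mem_disjointed_of_key_eq hnest hS hx hxy
  have hmeas (j : ℕ) : MeasurableSet (disjointed S j) :=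
    hU j ▸ hkey j (to_countable _).measurableSet
  have hcell (j : ℕ) (x) (hx : x ∈ disjointed S j) :
      μ (A ∩ key j ⁻¹' {key j x}) ≤ s * μ (key j ⁻¹' {key j x}) := by
    rw [disjointed_eq_inter_compl] at hx
    cases j with
    | zero => rwa [show key 0 x = k₀ from hx.1.1]
    | succ i =>
      by_contra! hdense
      exact mem_iInter₂.1 hx.2 i i.lt_succ_self ⟨hx.1.1, x, rfl, hdense⟩
  have hle (j : ℕ) : μ (A ∩ disjointed S j) ≤ s * μ (disjointed S j) := by
    rw [← hU j]
    exact measure_inter_preimage_le_mul (hkey j) (forall_mem_image.2 (hcell j))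
  calc μ (A ∩ Q) ≤ μ (⋃ j, A ∩ disjointed S j) := by
        rw [← inter_iUnion, iUnion_disjointed, ← inter_iUnion]
        exact measure_mono fun x hx => ⟨hx.1, hx.2, hcover hx⟩
    _ ≤ ∑' j, μ (A ∩ disjointed S j) := measure_iUnion_le _
    _ ≤ ∑' j, s * μ (disjointed S j) := ENNReal.tsum_le_tsum hle
    _ = s * μ (⋃ j, S j) := by
        rw [ENNReal.tsum_mul_left, ← measure_iUnion (disjoint_disjointed S) hmeas,
          iUnion_disjointed]
    _ ≤ s * μ (B ∩ Q) := by
        gcongr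
        exact iUnion_subset fun j x hx => ⟨hsub j hx, hx.1⟩

end CalderonZygmund

section Dyadic

variable {n j : ℕ} {x y : Euc n} {k : Fin n → ℤ}

/-- The label of the half-open dyadic cube of side `2⁻ʲ` containing `x`. The grid is shifted so that
the cell `0` of generation `0` is `[-1/2, 1/2)ⁿ`. -/
def dyadicKey (j : ℕ) (x : Euc n) : Fin n → ℤ := fun i => ⌊2 ^ j * (x i + 1 / 2)⌋

/-- The center of the dyadic cube of generation `j` with label `k`. -/
def dyadicCenter (j : ℕ) (k : Fin n → ℤ) : Euc n :=
  WithLp.toLp 2 fun i => (k i + 1 / 2) / 2 ^ j - 1 / 2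

lemma measurable_dyadicKey : Measurable (dyadicKey j : Euc n → Fin n → ℤ) := by
  refine measurable_pi_lambda _ fun i => Int.measurable_floor.comp (Continuous.measurable ?_)
  fun_prop

lemma dyadicKey_eq_of_succ (h : dyadicKey (j + 1) x = dyadicKey (j + 1) y) :
    dyadicKey j x = dyadicKey j y := by
  have hparent (z : Euc n) (i : Fin n) : dyadicKey j z i = dyadicKey (j + 1) z i / 2 := by
    have hfloor := Int.floor_div_natCast ((2 : ℝ) ^ (j + 1) * (z i + 1 / 2)) 2
    rwa [Nat.cast_ofNat, pow_succ', mul_assoc, mul_div_cancel_left₀ _ two_ne_zero, ← mul_assoc,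
      ← pow_succ'] at hfloor
  funext i
  rw [hparent, hparent, h]

lemma dyadicKey_eq_iff : dyadicKey j x = k ↔ ∀ i,
    x i ∈ Ico (dyadicCenter j k i - 1 / 2 ^ j / 2) (dyadicCenter j k i + 1 / 2 ^ j / 2) := by
  have hj : (0 : ℝ) < 2 ^ j := by positivity
  refine funext_iff.trans (forall_congr' fun i => ?_)
  have hleft : dyadicCenter j k i - 1 / 2 ^ j / 2 = k i / 2 ^ j - 1 / 2 := by
    simp only [dyadicCenter]
    ring
  have hright : dyadicCenter j k i + 1 / 2 ^ j / 2 = (k i + 1) / 2 ^ j - 1 / 2 := by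
    simp only [dyadicCenter]
    ring
  rw [dyadicKey, Int.floor_eq_iff, hleft, hright, mem_Ico, sub_le_iff_le_add, lt_sub_iff_add_lt,
    div_le_iff₀' hj, lt_div_iff₀' hj]

lemma cube_subset_dyadicKey_preimage :
    cube (1 / 2 ^ j) (dyadicCenter j k) ⊆ dyadicKey j ⁻¹' {k} := fun x hx =>
  dyadicKey_eq_iff.2 fun i => by
    have hxi := abs_lt.1 (hx i)
    constructor <;> linarith

lemma dyadicKey_dyadicCenter : dyadicKey j (dyadicCenter j k) = k :=
  cube_subset_dyadicKey_preimage fun i => by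
    rw [sub_self, abs_zero]
    positivity

lemma abs_sub_apply_le_of_dyadicKey_eq (h : dyadicKey j x = dyadicKey j y) (i : Fin n) :
    |x i - y i| ≤ 1 / 2 ^ j := by
  have hx := dyadicKey_eq_iff.1 h i
  have hy := dyadicKey_eq_iff.1 (rfl : dyadicKey j y = dyadicKey j y) i
  rw [abs_le]
  constructor <;> linarith [hx.1, hx.2, hy.1, hy.2]

lemma dyadicCenter_zero_zero : dyadicCenter 0 (0 : Fin n → ℤ) = 0 := by
  ext i
  simp [dyadicCenter]

lemma norm_le_of_dyadicKey_zero_eq_zero (hx : dyadicKey 0 x = 0) : ‖x‖ ≤ √n / 2 := by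
  refine (norm_le_sqrt_mul one_half_pos.le fun i => ?_).trans_eq (by ring)
  have hxi := dyadicKey_eq_iff.1 hx i
  simp only [dyadicCenter_zero_zero, PiLp.zero_apply, pow_zero, div_one] at hxi
  exact abs_le.2 ⟨by linarith [hxi.1], by linarith [hxi.2]⟩

lemma cube_one_subset_dyadicKey_preimage :
    cube 1 0 ⊆ dyadicKey 0 ⁻¹' {(0 : Fin n → ℤ)} := by
  simpa only [dyadicCenter_zero_zero, pow_zero, div_one] using
    cube_subset_dyadicKey_preimage (n := n) (j := 0) (k := 0)

lemma volume_dyadicKey_preimage (j : ℕ) (k : Fin n → ℤ) :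
    volume (dyadicKey j ⁻¹' {k}) = ENNReal.ofReal ((1 / 2 ^ j) ^ n) := by
  set box : Set (Fin n → ℝ) := univ.pi fun i =>
    Ico (dyadicCenter j k i - 1 / 2 ^ j / 2) (dyadicCenter j k i + 1 / 2 ^ j / 2)
  have hbox : dyadicKey j ⁻¹' {k} = (WithLp.ofLp : Euc n → Fin n → ℝ) ⁻¹' box := by
    ext x
    rw [mem_preimage, mem_singleton_iff, dyadicKey_eq_iff, mem_preimage, mem_univ_pi]
  rw [hbox, (PiLp.volume_preserving_ofLp (Fin n)).measure_preimage
    (MeasurableSet.univ_pi fun _ => measurableSet_Ico).nullMeasurableSet, Real.volume_pi_Ico]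
  simp only [add_sub_sub_cancel, add_halves, Finset.prod_const, Finset.card_univ, Fintype.card_fin]
  rw [← ENNReal.ofReal_pow (by positivity)]

lemma subset_iUnion_denseParents_dyadicKey {A : Set (Euc n)} (hA : IsOpen A) {s : ℝ≥0∞}
    (hs : s < 1) : A ⊆ ⋃ j, denseParents volume dyadicKey A s j := by
  intro x hx
  obtain ⟨δ, hδ, hδA⟩ := Metric.isOpen_iff.1 hA x hx
  have hlim : Tendsto (fun j : ℕ => √n * (1 / 2 ^ j : ℝ)) atTop (𝓝 0) := by
    simpa only [one_div_pow, mul_zero] using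
      (tendsto_pow_atTop_nhds_zero_of_lt_one (r := (1 / 2 : ℝ)) (by norm_num)
        (by norm_num)).const_mul (√n)
  obtain ⟨j, hj⟩ := (((tendsto_add_atTop_iff_nat 1).2 hlim).eventually_lt_const hδ).exists
  have hcell : dyadicKey (j + 1) ⁻¹' {dyadicKey (j + 1) x} ⊆ A := fun y hy => hδA <| by
    rw [mem_ball_iff_norm]
    exact (norm_le_sqrt_mul (by positivity) (abs_sub_apply_le_of_dyadicKey_eq hy)).trans_lt hj
  refine mem_iUnion.2 ⟨j, x, rfl, ?_⟩
  rw [inter_eq_right.2 hcell, volume_dyadicKey_preimage]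
  have hpos : ENNReal.ofReal ((1 / 2 ^ (j + 1)) ^ n) ≠ 0 :=
    (ENNReal.ofReal_pos.2 (by positivity)).ne'
  simpa only [one_mul] using ENNReal.mul_lt_mul_left hpos ENNReal.ofReal_ne_top hs

end Dyadic

/-! ### Decay of the bad set -/

lemma measure_inter_le_of_le_measure_sdiff {α : Type*} [MeasurableSpace α] {μ : Measure α}
    {A Q : Set α} {η : ℝ} (hA : MeasurableSet A) (hQ : μ Q ≠ ∞) (hη : 0 ≤ η)
    (h : ENNReal.ofReal η * μ Q ≤ μ (Q \ A)) : μ (A ∩ Q) ≤ ENNReal.ofReal (1 - η) * μ Q := by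
  rw [ENNReal.ofReal_sub 1 hη, ENNReal.ofReal_one, ENNReal.sub_mul fun _ _ => hQ, one_mul]
  refine ENNReal.le_sub_of_add_le_right (ENNReal.mul_ne_top ENNReal.ofReal_ne_top hQ) ?_
  calc μ (A ∩ Q) + ENNReal.ofReal η * μ Q ≤ μ (A ∩ Q) + μ (Q \ A) := by gcongr
    _ = μ Q := by rw [inter_comm, measure_inter_add_sdiff Q hA]

lemma pow_le_inv_mul_rpow_neg_log_div_log {σ M t : ℝ} {m : ℕ} (hσ : 0 < σ) (hσ₁ : σ ≤ 1)
    (hM : 1 < M) (ht : 0 < t) (htM : t ≤ M ^ (m + 1)) :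
    σ ^ m ≤ σ⁻¹ * t ^ (-(Real.log (1 / σ) / Real.log M)) := by
  have hexp : -(Real.log (1 / σ) / Real.log M) = Real.logb M σ := by
    rw [one_div, Real.log_inv, neg_div, neg_neg, Real.log_div_log]
  have hneg : Real.logb M σ ≤ 0 := Real.logb_nonpos hM hσ.le hσ₁
  calc σ ^ m = σ⁻¹ * (M ^ Real.logb M σ) ^ (m + 1) := by
        rw [Real.rpow_logb (by linarith) hM.ne' hσ, pow_succ', inv_mul_cancel_left₀ hσ.ne']
    _ = σ⁻¹ * (M ^ (m + 1)) ^ Real.logb M σ := by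
        rw [Real.rpow_pow_comm (by linarith)]
    _ ≤ σ⁻¹ * t ^ (-(Real.log (1 / σ) / Real.log M)) := by
        rw [hexp]
        gcongr ?_ * ?_
        exact Real.rpow_le_rpow_of_nonpos ht htM hneg

section Decay

variable {n : ℕ} {lam Lam : ℝ} {Ω : Set (Euc n)} {v : Euc n → ℝ}

lemma volume_Am_inter_dyadicKey_preimage_le (hΩ : IsOpen Ω) (hv : ContinuousOn v Ω) {K η : ℝ}
    (hη : 0 ≤ η) {j : ℕ} {k : Fin n → ℤ}
    (h : ENNReal.ofReal (η * (1 / 2 ^ j) ^ n)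
      ≤ volume (Gm K v Ω ∩ cube (1 / 2 ^ j) (dyadicCenter j k))) :
    volume (Am K v Ω ∩ dyadicKey j ⁻¹' {k})
      ≤ ENNReal.ofReal (1 - η) * volume (dyadicKey j ⁻¹' {k} : Set (Euc n)) := by
  refine measure_inter_le_of_le_measure_sdiff (isOpen_Am hΩ hv).measurableSet
    (volume_dyadicKey_preimage j k ▸ ENNReal.ofReal_ne_top) hη ?_
  rw [volume_dyadicKey_preimage, ← ENNReal.ofReal_mul hη]
  exact h.trans (measure_mono fun x hx =>
    ⟨cube_subset_dyadicKey_preimage hx.2, fun hbad => hbad.2 hx.1⟩)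

lemma dyadicKey_zero_preimage_subset (hB : closedBall 0 (2 * √n) ⊆ Ω) :
    dyadicKey 0 ⁻¹' {0} ⊆ Ω := fun x hx => hB <| by
  rw [mem_closedBall_zero_iff]
  linarith [norm_le_of_dyadicKey_zero_eq_zero hx, Real.sqrt_nonneg (n : ℝ)]

variable [NeZero n]

lemma contactFraction_pos (hlam : 0 < lam) (hLam : lam ≤ Lam) : 0 < contactFraction n lam Lam := by
  have hn : (1 : ℝ) ≤ n := by exact_mod_cast NeZero.one_le
  have hslope : 0 ≤ ((n : ℝ) - 1) * Lam := mul_nonneg (by linarith) (by linarith)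
  rw [contactFraction]
  positivity

lemma contactFraction_lt_one (hlam : 0 < lam) (hLam : lam ≤ Lam) :
    contactFraction n lam Lam < 1 := by
  have hn : (1 : ℝ) ≤ n := by exact_mod_cast NeZero.one_le
  have hslope : 0 ≤ ((n : ℝ) - 1) * Lam := mul_nonneg (by linarith) (by linarith)
  have hsqrt : 1 ≤ √(n : ℝ) := Real.one_le_sqrt.2 hn
  have hratio : lam / (lam + ((n : ℝ) - 1) * Lam) ≤ 1 :=
    div_le_one_of_le₀ (by linarith) (by linarith)
  have hside : 1 / (4 * √(n : ℝ)) < 1 := (div_lt_one (by positivity)).2 (by linarith)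
  exact mul_lt_one_of_nonneg_of_lt_one_right (pow_le_one₀ (by positivity) hratio) (by positivity)
    (pow_lt_one₀ (by positivity) hside (NeZero.ne n))

lemma volume_Am_criticalOpening_inter_le (hlam : 0 < lam) (hLam : lam ≤ Lam) (hΩ : IsOpen Ω)
    (hB : closedBall 0 (2 * √n) ⊆ Ω) (hv : ContinuousOn v Ω) (hs : ViscSupersol lam Lam Ω v)
    (hosc : ∀ x ∈ Ω, v 0 ≤ v x + 1 / 2) :
    volume (Am (criticalOpening n lam Lam) v Ω ∩ dyadicKey 0 ⁻¹' {0})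
      ≤ ENNReal.ofReal (1 - contactFraction n lam Lam) *
        volume (dyadicKey 0 ⁻¹' {0} : Set (Euc n)) := by
  have hsqrt : 1 ≤ √(n : ℝ) := Real.one_le_sqrt.2 (by exact_mod_cast NeZero.one_le)
  refine volume_Am_inter_dyadicKey_preimage_le hΩ hv (contactFraction_pos hlam hLam).le ?_
  rw [dyadicCenter_zero_zero, pow_zero, div_one, one_pow, mul_one]
  exact le_volume_Gm_criticalOpening_inter_cube_one hlam hLam hv hs
    ((closedBall_subset_closedBall (by linarith)).trans hB) hosc

lemma volume_Am_mul_inter_child_le (hlam : 0 < lam) (hLam : lam ≤ Lam) (hΩ : IsOpen Ω)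
    (hB : closedBall 0 (2 * √n) ⊆ Ω) (hv : ContinuousOn v Ω) (hs : ViscSupersol lam Lam Ω v)
    {K : ℝ} (hK : 0 < K) {j : ℕ} {x y : Euc n} (hx : x ∈ Gm K v Ω) (hx₀ : dyadicKey 0 x = 0)
    (hxy : dyadicKey j y = dyadicKey j x) :
    volume (Am (criticalOpening n lam Lam * K) v Ω ∩ dyadicKey (j + 1) ⁻¹' {dyadicKey (j + 1) y})
      ≤ ENNReal.ofReal (1 - contactFraction n lam Lam) *
        volume (dyadicKey (j + 1) ⁻¹' {dyadicKey (j + 1) y} : Set (Euc n)) := by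
  set c := dyadicCenter (j + 1) (dyadicKey (j + 1) y)
  have hxc : dyadicKey j x = dyadicKey j c :=
    hxy.symm.trans (dyadicKey_eq_of_succ dyadicKey_dyadicCenter.symm)
  have hc₀ : dyadicKey 0 x = dyadicKey 0 c :=
    key_eq_of_le (key := dyadicKey) (fun _ _ _ => dyadicKey_eq_of_succ) j.zero_le hxc
  have hc : ‖c‖ ≤ √n / 2 := norm_le_of_dyadicKey_zero_eq_zero (hc₀.symm.trans hx₀)
  have hhalf : (1 : ℝ) / 2 ^ j = 2 * (1 / 2 ^ (j + 1)) := by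
    rw [pow_succ]
    field_simp
  have hside : (1 : ℝ) / 2 ^ (j + 1) ≤ 1 / 2 := by
    have hj : (1 : ℝ) / 2 ^ j ≤ 1 := div_le_one_of_le₀ (one_le_pow₀ one_le_two) (by positivity)
    linarith
  refine volume_Am_inter_dyadicKey_preimage_le hΩ hv (contactFraction_pos hlam hLam).le <|
    le_volume_Gm_mul_inter_cube hlam hLam hv hs (by positivity) hK
      ((closedBall_subset_closedBall' ?_).trans hB) hx
      fun i => hhalf ▸ abs_sub_apply_le_of_dyadicKey_eq hxc i
  rw [dist_zero_right]
  nlinarith [mul_le_mul_of_nonneg_left hside (Real.sqrt_nonneg (n : ℝ))]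

lemma volume_Am_mul_inter_le (hlam : 0 < lam) (hLam : lam ≤ Lam) (hΩ : IsOpen Ω)
    (hB : closedBall 0 (2 * √n) ⊆ Ω) (hv : ContinuousOn v Ω) (hs : ViscSupersol lam Lam Ω v)
    (hosc : ∀ x ∈ Ω, v 0 ≤ v x + 1 / 2) {K : ℝ} (hK : 1 ≤ K) :
    volume (Am (criticalOpening n lam Lam * K) v Ω ∩ dyadicKey 0 ⁻¹' {0})
      ≤ ENNReal.ofReal (1 - contactFraction n lam Lam) *
        volume (Am K v Ω ∩ dyadicKey 0 ⁻¹' {0}) := by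
  have hM : 884736 ≤ criticalOpening n lam Lam := le_criticalOpening
  have hη := contactFraction_pos (n := n) hlam hLam
  refine measure_inter_le_mul_of_denseParents_subset (key := dyadicKey)
    (fun _ => measurable_dyadicKey) (fun _ _ _ => dyadicKey_eq_of_succ) ?_ ?_ ?_
  · exact (measure_mono (inter_subset_inter_left _
      (Am_subset_Am (le_mul_of_one_le_right (by linarith) hK)))).trans
        (volume_Am_criticalOpening_inter_le hlam hLam hΩ hB hv hs hosc)
  · exact inter_subset_left.trans (subset_iUnion_denseParents_dyadicKey (isOpen_Am hΩ hv)
      (ENNReal.ofReal_lt_one.2 (by linarith)))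
  · rintro j x ⟨hx₀, y, hxy, hdense⟩
    refine ⟨dyadicKey_zero_preimage_subset hB hx₀, fun hx => hdense.not_ge ?_⟩
    exact volume_Am_mul_inter_child_le hlam hLam hΩ hB hv hs (by linarith) hx hx₀ hxy

lemma volume_Am_pow_inter_le (hlam : 0 < lam) (hLam : lam ≤ Lam) (hΩ : IsOpen Ω)
    (hB : closedBall 0 (2 * √n) ⊆ Ω) (hv : ContinuousOn v Ω) (hs : ViscSupersol lam Lam Ω v)
    (hosc : ∀ x ∈ Ω, v 0 ≤ v x + 1 / 2) (m : ℕ) :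
    volume (Am (criticalOpening n lam Lam ^ m) v Ω ∩ dyadicKey 0 ⁻¹' {0})
      ≤ ENNReal.ofReal ((1 - contactFraction n lam Lam) ^ m) := by
  have hM : 884736 ≤ criticalOpening n lam Lam := le_criticalOpening
  have hσ := sub_pos.2 (contactFraction_lt_one (n := n) hlam hLam)
  induction m with
  | zero =>
    refine (measure_mono inter_subset_right).trans_eq ?_
    simp only [volume_dyadicKey_preimage, pow_zero, div_one, one_pow]
  | succ m ih =>
    rw [pow_succ', pow_succ', ENNReal.ofReal_mul hσ.le]
    refine (volume_Am_mul_inter_le hlam hLam hΩ hB hv hs hosc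
      (one_le_pow₀ (by linarith))).trans ?_
    gcongr

end Decay

theorem stmt_12_general {n : ℕ} [NeZero n] {lam Lam : ℝ} (hlam : 0 < lam) (hLam : lam ≤ Lam)
    {Ω : Set (Euc n)} (hΩ : IsOpen Ω) (hB : closedBall 0 (2 * √n) ⊆ Ω) {v : Euc n → ℝ}
    (hv : ContinuousOn v Ω) (hs : ViscSupersol lam Lam Ω v)
    (hosc : ∀ x ∈ Ω, v 0 ≤ v x + 1 / 2) {t : ℝ} (ht : 1 ≤ t) :
    volume (Am t v Ω ∩ cube 1 0) ≤
      ENNReal.ofReal ((1 - contactFraction n lam Lam)⁻¹ *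
        t ^ (-(Real.log (1 / (1 - contactFraction n lam Lam)) /
          Real.log (criticalOpening n lam Lam)))) := by
  have hM : 884736 ≤ criticalOpening n lam Lam := le_criticalOpening
  have hη := contactFraction_pos (n := n) hlam hLam
  have hσ := sub_pos.2 (contactFraction_lt_one (n := n) hlam hLam)
  obtain ⟨m, hmt, htm⟩ := exists_nat_pow_near ht (by linarith : 1 < criticalOpening n lam Lam)
  calc volume (Am t v Ω ∩ cube 1 0)
      ≤ volume (Am (criticalOpening n lam Lam ^ m) v Ω ∩ dyadicKey 0 ⁻¹' {0}) :=
        measure_mono (inter_subset_inter (Am_subset_Am hmt) cube_one_subset_dyadicKey_preimage)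
    _ ≤ ENNReal.ofReal ((1 - contactFraction n lam Lam) ^ m) :=
        volume_Am_pow_inter_le hlam hLam hΩ hB hv hs hosc m
    _ ≤ _ := ENNReal.ofReal_le_ofReal <|
        pow_le_inv_mul_rpow_neg_log_div_log hσ (by linarith) (by linarith) (by linarith) htm.le

/-- power decay |A⁻_t(v,Ω) ∩ Q₁| ≤ σ⁻¹ t^{−ε}, ε = log(1/σ)/log M. -/
theorem stmt_12 (n : ℕ) (hn : 2 ≤ n) (lam Lam : ℝ) (hlam : 0 < lam) (hLam : lam ≤ Lam)
    (Ω : Set (Euc n)) (hΩ : IsOpen Ω) (hB : closedBall 0 (2 * Real.sqrt n) ⊆ Ω)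
    (v : Euc n → ℝ) (hv : ContinuousOn v Ω) (hsuper : ViscSupersol lam Lam Ω v)
    (hbd : ∀ x ∈ Ω, |v x| ≤ 1 / 4) :
    ∀ t : ℝ,
      t > 884736 * (n : ℝ) ^ 3 *
          (36 * (n : ℝ)) ^ (max (1 : ℝ) (((n : ℝ) - 1) * Lam / lam - 1)) →
      volume (Am t v Ω ∩ cube 1 0) ≤
        ENNReal.ofReal
          ((1 - (lam / (lam + ((n : ℝ) - 1) * Lam)) ^ n * (1 / (4 * Real.sqrt n)) ^ n)⁻¹ *
            t ^ (-(Real.log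
                (1 / (1 - (lam / (lam + ((n : ℝ) - 1) * Lam)) ^ n * (1 / (4 * Real.sqrt n)) ^ n)) /
              Real.log (884736 * (n : ℝ) ^ 3 *
                (36 * (n : ℝ)) ^ (max (1 : ℝ) (((n : ℝ) - 1) * Lam / lam - 1)))))) := by
  intro t ht
  have : NeZero n := ⟨by omega⟩
  have hM : 884736 ≤ criticalOpening n lam Lam := le_criticalOpening
  have hosc : ∀ x ∈ Ω, v 0 ≤ v x + 1 / 2 := fun x hx => by
    have h₀ := abs_le.1 (hbd 0 (hB (mem_closedBall_self (by positivity))))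
    linarith [h₀.2, (abs_le.1 (hbd x hx)).1]
  exact stmt_12_general hlam hLam hΩ hB hv hsuper hosc
    ((by norm_num : (1 : ℝ) ≤ 884736).trans (hM.trans ht.le))
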